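/- Bias of debiased fast CUR decomposition (Theorem 4.8): There exist absolute constants C₀ > 0 and C' > 0 such that the following holds. Let n ≥ 3 and p ≥ 3, let X, C, R be as in the CUR model with Cᵀ C and R Rᵀ invertible, suppose every nonzero row c_i of C satisfies ‖c_i‖²/‖C‖_F² ≥ n^{−α_c} and every nonzero row ρ_j of Rᵀ satisfies ‖ρ_j‖²/‖Rᵀ‖_F² ≥ p^{−α_r} for constants α_c, α_r > 0, let π_C i > 0 with ℓ_i(C) < m_c · π_C i for all i and π_R j > 0 with ℓ_j(Rᵀ) < m_r · π_R j for all j, let 0 < δ ≤ min{n^{−(3+α_c)}, p^{−(3+α_r)}}, and assume m_c ≥ C₀ · θ_max(C) · c · log(c/δ) and m_r ≥ C₀ · θ_max(Rᵀ) · r · log(r/δ). Then there exists an event ζ ⊆ Ω with P(ζ) ≥ 1 − δ such that all matrices inverted in Ǔ are invertible on ζ and Bias_ζ(Ǔ) ≤ ε² · L(U_CUR), where ε = C' · ((log n / log log n) · √(θ_max(C)³ c³/m_c³) + (log p / log log p) · √(θ_max(Rᵀ)³ r³/m_r³)). -/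

import Mathlib

/-!
The two sketches are independent, and `Ǔ = A X Bᵀ`, where `A`, `B` are the sketched left inverses
of `C` and `Rᵀ`. On a product event the conditional mean factors as well, `E[Ǔ] = E[A] X E[B]ᵀ`
(`condExp_prod`), so it is enough to treat one side at a time.

For one side, write `C = U B` with orthonormal `U` and put `β = θ_max(C) c / m`. A drawn row `i`
has debiased weight `gᵢ = 1 / (m πᵢ - ℓᵢ)`, and the sampled Gram matrix is `H = ∑ₛ g u uᵀ`.

* The event is `H ≥ 1/2`. Its complement is bounded by following the potential `tr (a + H)^(-q)`,
  with `q` a power of two of order `1/β`. One draw changes it by a Sherman–Morrison update, which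
  the Lieb–Thirring inequality separates from the resolvent (`potential_rankOne`); on average this
  pays for an increase of `a` (`potential_average`). Markov's inequality (`prob_bad_le`) gives a
  failure probability below `δ/2`, and also below a multiple of `β³`.
* For a residual `w` with `Uᵀ w = 0`, the mean of `H⁻¹ ∑ₛ g w u` is expanded over the left-out
  draw. Sherman–Morrison turns the contribution of row `i` into
  `wᵢ (m πᵢ gᵢ / (1 + gᵢ ρᵢ)) K⁻¹ uᵢ`, where `K` is the Gram matrix of the other draws and
  `ρᵢ = uᵢᵀ K⁻¹ uᵢ`. Because `m πᵢ gᵢ = 1 + gᵢ ℓᵢ`, the factor differs from `1` only by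
  `gᵢ (ℓᵢ - ρᵢ) / (1 + gᵢ ρᵢ)`, and the term with factor `1` vanishes as `Uᵀ w = 0`. The second
  moment of `K uᵢ - uᵢ` is `O(β ℓᵢ)`, so the mean has squared norm `O(β³) ‖w‖²`
  (`Design.good_part`). Samples for which `K` is not bounded below contribute `O(β³)` by the tail
  bound (`Design.bad_part`).

Finally, `C E[A]` is an oblique projection onto the column space of `C`, of norm `O(β^(3/2))` on
its orthogonal complement, and likewise for `R`. By Pythagoras the excess loss is the squared norm
of `C E[A] E (Rᵀ E[B])ᵀ` with `E = X - C U_CUR R`, and as the two-sided projection of `E` vanishes,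
it is bounded by the sum of the two one-sided contributions (`excess_loss`). The factors
`log n / log log n` are at least `1`, so the bound proved here is stronger than the stated one by
these factors.
-/

open Matrix Finset

noncomputable section

/-- Probability of the i.i.d. sample `ω` of `m` draws from the sampling
distribution `π` (pmf of the product measure on `Ω = Fin m → Fin n`). -/
def samplingP {n : ℕ} (π : Fin n → ℝ) {m : ℕ} (ω : Fin m → Fin n) : ℝ :=
  ∏ s, π (ω s)

/-- The sampling matrix `S(ω) ∈ ℝ^{m×n}` with `S(ω)_{s,j} = 1/√(m π_{ω s})` if
`j = ω s` and `0` otherwise. -/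
def samplingS {n : ℕ} (π : Fin n → ℝ) {m : ℕ} (ω : Fin m → Fin n) :
    Matrix (Fin m) (Fin n) ℝ :=
  Matrix.of fun s j => if j = ω s then 1 / Real.sqrt (m * π (ω s)) else 0

/-- The `i`-th leverage score `ℓ_i(X) = x_iᵀ (Xᵀ X)⁻¹ x_i`. -/
def lev {n p : ℕ} (X : Matrix (Fin n) (Fin p) ℝ) (i : Fin n) : ℝ :=
  X i ⬝ᵥ ((Xᵀ * X)⁻¹ *ᵥ X i)

/-- Maximum importance sampling approximation factor
`θ_max(X) = max_i ℓ_i(X)/(p π_i)`. -/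
def thetaMax {n p : ℕ} (X : Matrix (Fin n) (Fin p) ℝ) (π : Fin n → ℝ) : ℝ :=
  ⨆ i, lev X i / (p * π i)

/-- Probability of an event `ζ` relative to the pmf `P`. -/
def eventProb {Ω : Type*} (P : Ω → ℝ) (ζ : Finset Ω) : ℝ :=
  ∑ ω ∈ ζ, P ω

/-- Conditional expectation `E_ζ[f] = P(ζ)⁻¹ ∑_{ω ∈ ζ} P(ω) f(ω)`. -/
def condExp {Ω V : Type*} [AddCommMonoid V] [Module ℝ V]
    (P : Ω → ℝ) (ζ : Finset Ω) (f : Ω → V) : V :=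
  (eventProb P ζ)⁻¹ • ∑ ω ∈ ζ, P ω • f ω

/-- Frobenius norm `‖A‖_F = √(trace (Aᵀ A))`. -/
def frobNorm {k l : ℕ} (A : Matrix (Fin k) (Fin l) ℝ) : ℝ :=
  Real.sqrt ((Aᵀ * A).trace)

/-- Loewner order: `A ⪯ B` iff `B − A` is positive semidefinite. -/
def loewnerLE {k : ℕ} (A B : Matrix (Fin k) (Fin k) ℝ) : Prop :=
  (B - A).PosSemidef

/-- Debiased sampling matrix
`Š(ω) = diag(1/√(1 − ℓ_{ω s}(X)/(m π_{ω s})))_{s} · S(ω)`. -/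
def samplingSdeb {n p : ℕ} (X : Matrix (Fin n) (Fin p) ℝ) (π : Fin n → ℝ) {m : ℕ}
    (ω : Fin m → Fin n) : Matrix (Fin m) (Fin n) ℝ :=
  Matrix.diagonal (fun s => 1 / Real.sqrt (1 - lev X (ω s) / (m * π (ω s)))) *
    samplingS π ω

/-- CUR reconstruction loss `L(U) = ‖C U R − X‖_F²`. -/
def lossCUR {n p c r : ℕ} (X : Matrix (Fin n) (Fin p) ℝ)
    (Cm : Matrix (Fin n) (Fin c) ℝ) (Rm : Matrix (Fin r) (Fin p) ℝ)
    (U : Matrix (Fin c) (Fin r) ℝ) : ℝ :=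
  frobNorm (Cm * U * Rm - X) ^ 2

/-- The optimal core matrix `U_CUR = (Cᵀ C)⁻¹ Cᵀ X Rᵀ (R Rᵀ)⁻¹`. -/
def optCUR {n p c r : ℕ} (X : Matrix (Fin n) (Fin p) ℝ)
    (Cm : Matrix (Fin n) (Fin c) ℝ) (Rm : Matrix (Fin r) (Fin p) ℝ) :
    Matrix (Fin c) (Fin r) ℝ :=
  (Cmᵀ * Cm)⁻¹ * Cmᵀ * X * Rmᵀ * (Rm * Rmᵀ)⁻¹

/-- Joint pmf on the CUR sample space
`Ω = (Fin m_c → Fin n) × (Fin m_r → Fin p)`. -/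
def curP {n p mc mr : ℕ} (πC : Fin n → ℝ) (πR : Fin p → ℝ)
    (ω : (Fin mc → Fin n) × (Fin mr → Fin p)) : ℝ :=
  samplingP πC ω.1 * samplingP πR ω.2

/-- The debiased fast CUR estimator
`Ǔ(ω) = ((Š_C C)ᵀ Š_C C)⁻¹ (Š_C C)ᵀ (Š_C X Š_Rᵀ) Š_R Rᵀ (R Š_Rᵀ Š_R Rᵀ)⁻¹`. -/
def curUcheck {n p c r mc mr : ℕ} (X : Matrix (Fin n) (Fin p) ℝ)
    (Cm : Matrix (Fin n) (Fin c) ℝ) (Rm : Matrix (Fin r) (Fin p) ℝ)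
    (πC : Fin n → ℝ) (πR : Fin p → ℝ)
    (ω : (Fin mc → Fin n) × (Fin mr → Fin p)) : Matrix (Fin c) (Fin r) ℝ :=
  ((samplingSdeb Cm πC ω.1 * Cm)ᵀ * (samplingSdeb Cm πC ω.1 * Cm))⁻¹ *
    (samplingSdeb Cm πC ω.1 * Cm)ᵀ *
    (samplingSdeb Cm πC ω.1 * X * (samplingSdeb Rmᵀ πR ω.2)ᵀ) *
    (samplingSdeb Rmᵀ πR ω.2 * Rmᵀ) *
    (Rm * (samplingSdeb Rmᵀ πR ω.2)ᵀ * samplingSdeb Rmᵀ πR ω.2 * Rmᵀ)⁻¹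

/-! ### Trace inequalities for powers of products -/

lemma trace_pow_mul_comm {c : ℕ} (A B : Matrix (Fin c) (Fin c) ℝ) (q : ℕ) :
    ((A * B) ^ q).trace = ((B * A) ^ q).trace := by
  cases q with
  | zero => simp
  | succ q =>
    have h : (A * B) ^ q * A = A * (B * A) ^ q := by
      have := SemiconjBy.pow_right (show SemiconjBy A (B * A) (A * B) by
        simp [SemiconjBy, mul_assoc]) q
      exact this.symm
    rw [pow_succ, ← mul_assoc, h, mul_assoc, Matrix.trace_mul_comm, mul_assoc, ← pow_succ]

lemma trace_mul_le_half {c : ℕ} (A B : Matrix (Fin c) (Fin c) ℝ) :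
    (A * B).trace ≤ ((Aᵀ * A).trace + (Bᵀ * B).trace) / 2 := by
  have e1 : (A * B).trace = ∑ i, ∑ j, A i j * B j i := by
    simp [Matrix.trace, Matrix.mul_apply]
  have e2 : (Aᵀ * A).trace = ∑ i, ∑ j, A i j * A i j := by
    simp only [Matrix.trace, Matrix.mul_apply, Matrix.diag_apply, Matrix.transpose_apply]
    exact Finset.sum_comm
  have e3 : (Bᵀ * B).trace = ∑ i, ∑ j, B j i * B j i := by
    simp [Matrix.trace, Matrix.mul_apply]
  rw [e1, e2, e3, ← Finset.sum_add_distrib, Finset.sum_div]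
  refine Finset.sum_le_sum fun i _ => ?_
  rw [← Finset.sum_add_distrib, Finset.sum_div]
  refine Finset.sum_le_sum fun j _ => ?_
  nlinarith [sq_nonneg (A i j - B j i)]

/-- The two halves of the classical Lieb–Thirring induction: each level of either inequality
follows from the previous level of both. -/
lemma lieb_thirring_aux {c : ℕ} (k : ℕ) :
    (∀ P Y : Matrix (Fin c) (Fin c) ℝ, Pᵀ = P → Yᵀ = Y →
      ((P * Y) ^ (2 ^ k)).trace ≤ (P ^ (2 ^ k) * Y ^ (2 ^ k)).trace) ∧
    (∀ M : Matrix (Fin c) (Fin c) ℝ,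
      (M ^ (2 ^ (k + 1))).trace ≤ ((Mᵀ * M) ^ (2 ^ k)).trace) := by
  induction k with
  | zero =>
    refine ⟨fun P Y _ _ => by simp, fun M => ?_⟩
    have := trace_mul_le_half M M
    simp only [zero_add, pow_one, pow_zero]
    rw [pow_two]
    linarith
  | succ k ih =>
    obtain ⟨hLT, hMM⟩ := ih
    refine ⟨fun P Y hP hY => ?_, fun M => ?_⟩
    · calc ((P * Y) ^ (2 ^ (k + 1))).trace ≤ (((P * Y)ᵀ * (P * Y)) ^ (2 ^ k)).trace := hMM _
        _ = ((Y * (P * P * Y)) ^ (2 ^ k)).trace := by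
            rw [Matrix.transpose_mul, hP, hY]; simp only [mul_assoc]
        _ = (((P * P) * (Y * Y)) ^ (2 ^ k)).trace := by
            rw [trace_pow_mul_comm]; simp only [mul_assoc]
        _ ≤ ((P * P) ^ (2 ^ k) * (Y * Y) ^ (2 ^ k)).trace :=
            hLT _ _ (by rw [Matrix.transpose_mul, hP]) (by rw [Matrix.transpose_mul, hY])
        _ = _ := by rw [← pow_two, ← pow_two, ← pow_mul, ← pow_mul, ← pow_succ']
    · have hs1 : (Mᵀ * M)ᵀ = Mᵀ * M := by simp [Matrix.transpose_mul]
      have hs2 : (M * Mᵀ)ᵀ = M * Mᵀ := by simp [Matrix.transpose_mul]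
      calc (M ^ (2 ^ (k + 1 + 1))).trace = ((M * M) ^ (2 ^ (k + 1))).trace := by
            rw [← pow_two, ← pow_mul, ← pow_succ']
        _ ≤ (((M * M)ᵀ * (M * M)) ^ (2 ^ k)).trace := hMM _
        _ = ((Mᵀ * (Mᵀ * M * M)) ^ (2 ^ k)).trace := by
            rw [Matrix.transpose_mul]; simp only [mul_assoc]
        _ = (((Mᵀ * M) * (M * Mᵀ)) ^ (2 ^ k)).trace := by
            rw [trace_pow_mul_comm]; simp only [mul_assoc]
        _ ≤ ((Mᵀ * M) ^ (2 ^ k) * (M * Mᵀ) ^ (2 ^ k)).trace := hLT _ _ hs1 hs2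
        _ ≤ _ := trace_mul_le_half _ _
        _ = ((Mᵀ * M) ^ (2 ^ (k + 1))).trace := by
            rw [Matrix.transpose_pow, Matrix.transpose_pow, hs1, hs2, ← pow_add, ← pow_add,
              ← two_mul, ← pow_succ', trace_pow_mul_comm M Mᵀ]
            ring

/-- The Lieb–Thirring trace inequality for exponents that are powers of two. -/
lemma lieb_thirring {c : ℕ} (k : ℕ) (P Y : Matrix (Fin c) (Fin c) ℝ) (hP : Pᵀ = P)
    (hY : Yᵀ = Y) : ((P * Y) ^ (2 ^ k)).trace ≤ (P ^ (2 ^ k) * Y ^ (2 ^ k)).trace :=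
  (lieb_thirring_aux k).1 P Y hP hY

/-! ### Spectral form of positive semidefinite matrices -/

/-- Real symmetric positive semidefinite matrices, phrased through quadratic forms on
`Fin c → ℝ`. -/
def PSD {c : ℕ} (H : Matrix (Fin c) (Fin c) ℝ) : Prop :=
  Hᵀ = H ∧ ∀ x, 0 ≤ x ⬝ᵥ (H *ᵥ x)

lemma PSD.add {c : ℕ} {A B : Matrix (Fin c) (Fin c) ℝ} (hA : PSD A) (hB : PSD B) :
    PSD (A + B) := by
  refine ⟨by rw [Matrix.transpose_add, hA.1, hB.1], fun x => ?_⟩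
  rw [Matrix.add_mulVec, dotProduct_add]
  exact add_nonneg (hA.2 x) (hB.2 x)

lemma PSD.zero {c : ℕ} : PSD (0 : Matrix (Fin c) (Fin c) ℝ) := ⟨by simp, fun x => by simp⟩

lemma PSD.sum {c : ℕ} {ι : Type*} (s : Finset ι) (A : ι → Matrix (Fin c) (Fin c) ℝ)
    (h : ∀ i ∈ s, PSD (A i)) : PSD (∑ i ∈ s, A i) :=
  Finset.sum_induction _ PSD (fun _ _ => PSD.add) PSD.zero h

lemma dotProduct_rankOne {c : ℕ} (g : ℝ) (u x : Fin c → ℝ) :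
    x ⬝ᵥ ((g • vecMulVec u u) *ᵥ x) = g * (u ⬝ᵥ x) ^ 2 := by
  rw [Matrix.smul_mulVec, Matrix.vecMulVec_mulVec, dotProduct_smul]
  simp [dotProduct_comm x u, pow_two]

lemma PSD.rankOne {c : ℕ} {g : ℝ} (hg : 0 ≤ g) (u : Fin c → ℝ) :
    PSD (g • vecMulVec u u) := by
  refine ⟨by rw [Matrix.transpose_smul, Matrix.transpose_vecMulVec], fun x => ?_⟩
  rw [dotProduct_rankOne]
  positivity

lemma PSD.spectral {c : ℕ} {H : Matrix (Fin c) (Fin c) ℝ} (hH : PSD H) :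
    ∃ (O : Matrix (Fin c) (Fin c) ℝ) (μ : Fin c → ℝ), Oᵀ * O = 1 ∧ O * Oᵀ = 1 ∧
      (∀ i, 0 ≤ μ i) ∧ H = O * diagonal μ * Oᵀ := by
  have hP : H.PosSemidef := by
    refine Matrix.PosSemidef.of_dotProduct_mulVec_nonneg ?_ fun x => by simpa using hH.2 x
    rw [Matrix.IsHermitian, Matrix.conjTranspose_eq_transpose_of_trivial, hH.1]
  refine ⟨hP.1.eigenvectorUnitary, hP.1.eigenvalues, ?_, ?_, hP.eigenvalues_nonneg, ?_⟩
  · have := Unitary.coe_star_mul_self hP.1.eigenvectorUnitary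
    rwa [Matrix.star_eq_conjTranspose, Matrix.conjTranspose_eq_transpose_of_trivial] at this
  · have := Unitary.coe_mul_star_self hP.1.eigenvectorUnitary
    rwa [Unitary.coe_star, Matrix.star_eq_conjTranspose, Matrix.conjTranspose_eq_transpose_of_trivial] at this
  · have := hP.1.spectral_theorem
    rw [Unitary.conjStarAlgAut_apply, Matrix.star_eq_conjTranspose,
      Matrix.conjTranspose_eq_transpose_of_trivial] at this
    exact this

/-- Resolvent of a matrix given in spectral form. -/
lemma resolvent_spectral {c : ℕ} {O : Matrix (Fin c) (Fin c) ℝ} {μ : Fin c → ℝ} {a : ℝ}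
    (h1 : Oᵀ * O = 1) (h2 : O * Oᵀ = 1) (ha : ∀ i, a + μ i ≠ 0) :
    (a • 1 + O * diagonal μ * Oᵀ)⁻¹ = O * diagonal (fun i => (a + μ i)⁻¹) * Oᵀ := by
  refine Matrix.inv_eq_right_inv ?_
  have e : a • 1 + O * diagonal μ * Oᵀ = O * diagonal (fun i => a + μ i) * Oᵀ := by
    have : diagonal (fun i => a + μ i) = a • (1 : Matrix (Fin c) (Fin c) ℝ) + diagonal μ := by
      rw [Matrix.smul_one_eq_diagonal, Matrix.diagonal_add]
    rw [this, mul_add, add_mul, mul_smul_comm, mul_one, smul_mul_assoc, h2]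
  rw [e]
  calc O * diagonal (fun i => a + μ i) * Oᵀ * (O * diagonal (fun i => (a + μ i)⁻¹) * Oᵀ)
      = O * diagonal (fun i => a + μ i) * (Oᵀ * O) * diagonal (fun i => (a + μ i)⁻¹) * Oᵀ := by
        simp only [mul_assoc]
    _ = O * Oᵀ := by
        rw [h1, mul_one, mul_assoc O, Matrix.diagonal_mul_diagonal]
        simp [mul_inv_cancel₀ (ha _)]
    _ = 1 := h2

lemma conj_diagonal_pow {c : ℕ} {O : Matrix (Fin c) (Fin c) ℝ} (h1 : Oᵀ * O = 1)
    (h2 : O * Oᵀ = 1) (d : Fin c → ℝ) (q : ℕ) :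
    (O * diagonal d * Oᵀ) ^ q = O * diagonal (fun i => d i ^ q) * Oᵀ := by
  induction q with
  | zero => simp [h2]
  | succ q ih =>
    rw [pow_succ, ih]
    calc O * diagonal (fun i => d i ^ q) * Oᵀ * (O * diagonal d * Oᵀ)
        = O * diagonal (fun i => d i ^ q) * (Oᵀ * O) * diagonal d * Oᵀ := by
          simp only [mul_assoc]
      _ = _ := by
          rw [h1, mul_one, mul_assoc O, Matrix.diagonal_mul_diagonal]
          simp [pow_succ]

lemma trace_conj_diagonal {c : ℕ} {O : Matrix (Fin c) (Fin c) ℝ} (h1 : Oᵀ * O = 1)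
    (d : Fin c → ℝ) : (O * diagonal d * Oᵀ).trace = ∑ i, d i := by
  rw [Matrix.trace_mul_comm, ← mul_assoc, h1, one_mul, Matrix.trace_diagonal]

/-- The resolvent trace potential `tr ((a + H)⁻¹)^q`. -/
def potential {c : ℕ} (q : ℕ) (a : ℝ) (H : Matrix (Fin c) (Fin c) ℝ) : ℝ :=
  (((a • 1 + H)⁻¹) ^ q).trace

/-- Raising the shift from `a` to `a + η` lowers the potential by at most its first-order change,
by Bernoulli's inequality on each eigenvalue. -/
lemma potential_shift {c : ℕ} {H : Matrix (Fin c) (Fin c) ℝ} (hH : PSD H) {a η : ℝ} (ha : 0 < a)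
    (hη : 0 ≤ η) (q : ℕ) :
    potential q a H - q * η * potential (q + 1) a H ≤ potential q (a + η) H := by
  obtain ⟨O, μ, h1, h2, hμ, rfl⟩ := hH.spectral
  have p1 : ∀ i, 0 < a + μ i := fun i => by linarith [hμ i]
  have p2 : ∀ i, 0 < a + η + μ i := fun i => by linarith [hμ i]
  simp only [potential]
  rw [resolvent_spectral h1 h2 (fun i => (p1 i).ne'), resolvent_spectral h1 h2 (fun i => (p2 i).ne')]
  simp only [conj_diagonal_pow h1 h2, trace_conj_diagonal h1]
  rw [Finset.mul_sum, ← Finset.sum_sub_distrib]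
  refine Finset.sum_le_sum fun i _ => ?_
  have hr := p1 i
  set l := a + μ i with hl
  have e : (a + η + μ i)⁻¹ = l⁻¹ * (1 + -(η / (l + η))) := by
    have : a + η + μ i = l + η := by rw [hl]; ring
    rw [this]; field_simp; ring
  rw [e, mul_pow]
  have hle : η / (l + η) ≤ η * l⁻¹ := by
    rw [← div_eq_mul_inv]; gcongr; linarith
  have h3 : η / (l + η) ≤ 1 := by rw [div_le_one (by positivity)]; linarith
  have hB := one_add_mul_le_pow (show (-2 : ℝ) ≤ -(η / (l + η)) by linarith) q
  have h4 : 1 - q * (η * l⁻¹) ≤ (1 + -(η / (l + η))) ^ q := by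
    refine le_trans ?_ hB
    have := mul_le_mul_of_nonneg_left hle (Nat.cast_nonneg (α := ℝ) q)
    linarith
  have h5 := mul_le_mul_of_nonneg_left h4 (show 0 ≤ l⁻¹ ^ q by positivity)
  refine le_trans (le_of_eq ?_) h5
  rw [pow_succ]; ring

/-- If `H` is not bounded below by `t`, then one eigenvalue forces the potential up. -/
lemma potential_lower {c : ℕ} {H : Matrix (Fin c) (Fin c) ℝ} (hH : PSD H) {a t : ℝ} (ha : 0 < a)
    (q : ℕ) (hbad : ¬ ∀ x, t * (x ⬝ᵥ x) ≤ x ⬝ᵥ (H *ᵥ x)) :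
    ((a + t)⁻¹) ^ q ≤ potential q a H := by
  obtain ⟨O, μ, h1, h2, hμ, rfl⟩ := hH.spectral
  have p1 : ∀ i, 0 < a + μ i := fun i => by linarith [hμ i]
  have hex : ∃ i, μ i < t := by
    by_contra! hcon
    apply hbad
    intro x
    have e1 : x ⬝ᵥ x = ∑ i, (Oᵀ *ᵥ x) i ^ 2 := by
      have : x ⬝ᵥ x = (Oᵀ *ᵥ x) ⬝ᵥ (Oᵀ *ᵥ x) := by
        rw [Matrix.dotProduct_mulVec, Matrix.vecMul_transpose, Matrix.mulVec_mulVec, h2,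
          Matrix.one_mulVec]
      rw [this]; simp [dotProduct, pow_two]
    have e2 : x ⬝ᵥ ((O * diagonal μ * Oᵀ) *ᵥ x) = ∑ i, μ i * (Oᵀ *ᵥ x) i ^ 2 := by
      rw [← Matrix.mulVec_mulVec, ← Matrix.mulVec_mulVec, Matrix.dotProduct_mulVec,
        ← Matrix.mulVec_transpose]
      simp only [dotProduct, Matrix.mulVec_diagonal]
      exact Finset.sum_congr rfl fun i _ => by ring
    rw [e1, e2, Finset.mul_sum]
    exact Finset.sum_le_sum fun i _ => mul_le_mul_of_nonneg_right (hcon i) (sq_nonneg _)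
  obtain ⟨i, hi⟩ := hex
  simp only [potential]
  rw [resolvent_spectral h1 h2 (fun i => (p1 i).ne')]
  simp only [conj_diagonal_pow h1 h2, trace_conj_diagonal h1]
  have hpi := p1 i
  refine le_trans ?_ (Finset.single_le_sum (f := fun i => (a + μ i)⁻¹ ^ q)
    (fun j _ => by have := p1 j; positivity) (Finset.mem_univ i))
  have : (a + t)⁻¹ ≤ (a + μ i)⁻¹ := by gcongr
  exact pow_le_pow_left₀ (by have : 0 < a + t := by linarith
                             positivity) this q

lemma potential_zero {c : ℕ} {a : ℝ} (ha : 0 < a) (q : ℕ) :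
    potential q a (0 : Matrix (Fin c) (Fin c) ℝ) = c * (a⁻¹) ^ q := by
  have h := resolvent_spectral (c := c) (O := 1) (μ := 0) (a := a) (by simp) (by simp)
    (fun i => by simpa using ha.ne')
  have e : (0 : Matrix (Fin c) (Fin c) ℝ) = 1 * diagonal 0 * 1ᵀ := by simp
  rw [potential, e, h, conj_diagonal_pow (by simp) (by simp), trace_conj_diagonal (by simp)]
  simp

lemma potential_nonneg {c : ℕ} {H : Matrix (Fin c) (Fin c) ℝ} (hH : PSD H) {a : ℝ} (ha : 0 < a)
    (q : ℕ) : 0 ≤ potential q a H := by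
  obtain ⟨O, μ, h1, h2, hμ, rfl⟩ := hH.spectral
  have p1 : ∀ i, 0 < a + μ i := fun i => by linarith [hμ i]
  simp only [potential]
  rw [resolvent_spectral h1 h2 (fun i => (p1 i).ne')]
  simp only [conj_diagonal_pow h1 h2, trace_conj_diagonal h1]
  exact Finset.sum_nonneg fun j _ => by have := p1 j; positivity

/-! ### Lower-tail matrix Chernoff bound for rank-one samples -/

/-- The sampled Gram matrix `∑ₛ g(ωₛ) u(ωₛ) u(ωₛ)ᵀ`, where `uᵢᵀ` is the `i`-th row of `U`. -/
def sampleGram {n c m : ℕ} (U : Matrix (Fin n) (Fin c) ℝ) (g : Fin n → ℝ) (ω : Fin m → Fin n) :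
    Matrix (Fin c) (Fin c) ℝ :=
  ∑ s, g (ω s) • vecMulVec (U (ω s)) (U (ω s))

lemma sampleGram_PSD {n c m : ℕ} (U : Matrix (Fin n) (Fin c) ℝ) {g : Fin n → ℝ}
    (hg : ∀ i, 0 ≤ g i) (ω : Fin m → Fin n) : PSD (sampleGram U g ω) :=
  PSD.sum _ _ fun _ _ => PSD.rankOne (hg _) _

lemma sampleGram_insertNth {n c N : ℕ} (U : Matrix (Fin n) (Fin c) ℝ) (g : Fin n → ℝ)
    (s : Fin (N + 1)) (i : Fin n) (ω : Fin N → Fin n) :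
    sampleGram U g (s.insertNth i ω : Fin (N + 1) → Fin n) =
      g i • vecMulVec (U i) (U i) + sampleGram U g ω := by
  simp [sampleGram, Fin.sum_univ_succAbove _ s]

/-- Fubini: one draw may be singled out from an i.i.d. sample. -/
lemma sum_sample {n N : ℕ} (π : Fin n → ℝ) (s : Fin (N + 1)) (F : (Fin (N + 1) → Fin n) → ℝ) :
    ∑ ω, samplingP π ω * F ω =
      ∑ i, π i * ∑ ω : Fin N → Fin n, samplingP π ω * F (s.insertNth i ω) := by
  rw [← (Fin.insertNthEquiv (fun _ => Fin n) s).sum_comp, Fintype.sum_prod_type]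
  refine Finset.sum_congr rfl fun i _ => ?_
  rw [Finset.mul_sum]
  refine Finset.sum_congr rfl fun ω _ => ?_
  change samplingP π (s.insertNth i ω : Fin (N + 1) → Fin n) * F (s.insertNth i ω) = _
  have h : samplingP π (s.insertNth i ω : Fin (N + 1) → Fin n) = π i * samplingP π ω := by
    simp [samplingP, Fin.prod_univ_succAbove _ s]
  rw [h, mul_assoc]

lemma samplingP_nonneg {n m : ℕ} {π : Fin n → ℝ} (hπ : ∀ i, 0 ≤ π i) (ω : Fin m → Fin n) :
    0 ≤ samplingP π ω := Finset.prod_nonneg fun _ _ => hπ _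

lemma samplingP_sum {n m : ℕ} {π : Fin n → ℝ} (hπ1 : ∑ i, π i = 1) :
    ∑ ω : Fin m → Fin n, samplingP π ω = 1 := by
  induction m with
  | zero => simp [samplingP]
  | succ N ih =>
    have := sum_sample (N := N) π 0 (fun _ => 1)
    simp only [mul_one] at this
    rw [this, ih]; simpa using hπ1

/-- Powers of the Sherman–Morrison factor `1 - t y yᵀ`, with a lower bound for the rank-one
coefficient. -/
lemma rankOne_pow {c : ℕ} (y : Fin c → ℝ) {g : ℝ} (hg : 0 ≤ g) (q : ℕ) :
    ∃ t, (1 - (g / (1 + g * (y ⬝ᵥ y))) • vecMulVec y y) ^ q = 1 - t • vecMulVec y y ∧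
      q * g / (1 + q * (g * (y ⬝ᵥ y))) ≤ t := by
  have hyy : 0 ≤ y ⬝ᵥ y := by simpa using dotProduct_star_self_nonneg y
  set s := y ⬝ᵥ y with hs
  induction q with
  | zero => exact ⟨0, by simp, by simp⟩
  | succ q ih =>
    obtain ⟨t, ht, hle⟩ := ih
    refine ⟨g / (1 + g * s) + t / (1 + g * s), ?_, ?_⟩
    · rw [pow_succ, ht, sub_mul, one_mul, mul_sub, mul_one, smul_mul_smul_comm,
        Matrix.vecMulVec_mul_vecMulVec, ← hs, Matrix.vecMulVec_smul, smul_smul]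
      have : (1 - (g / (1 + g * s)) • vecMulVec y y -
          (t • vecMulVec y y - (t * (g / (1 + g * s)) * s) • vecMulVec y y)) =
          1 - ((g / (1 + g * s)) + (t - t * (g / (1 + g * s)) * s)) • vecMulVec y y := by
        module
      rw [this]
      congr 2
      have h1 : 1 + g * s ≠ 0 := by positivity
      field_simp
      ring
    · have h1 : (q * g / (1 + q * (g * s)) + g) / (1 + g * s) ≤
          g / (1 + g * s) + t / (1 + g * s) := by
        rw [← add_div]
        exact div_le_div_of_nonneg_right (by linarith) (by positivity)
      refine le_trans ?_ h1
      have e : q * g / (1 + q * (g * s)) + g = (q * g + g * (1 + q * (g * s))) / (1 + q * (g * s)) := by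
        have : (1 : ℝ) + q * (g * s) ≠ 0 := by positivity
        field_simp
      rw [e, div_div, div_le_div_iff₀ (by positivity) (by positivity)]
      push_cast
      have h0 : 0 ≤ (q : ℝ) * g * (g * s) := by positivity
      nlinarith [h0]

/-- Spectral square root of a resolvent: `(a + H)⁻¹ = VᵀV` with `V Vᵀ` diagonal. -/
lemma resolvent_factor {c : ℕ} {H : Matrix (Fin c) (Fin c) ℝ} (hH : PSD H) {a : ℝ}
    (ha : 1 ≤ a) : ∃ (V : Matrix (Fin c) (Fin c) ℝ) (d : Fin c → ℝ),
      (a • 1 + H)⁻¹ = Vᵀ * V ∧ V * Vᵀ = diagonal d ∧ (a • 1 + H) * (a • 1 + H)⁻¹ = 1 ∧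
      (∀ i, 0 ≤ d i) ∧ (∀ u : Fin c → ℝ, (V *ᵥ u) ⬝ᵥ (V *ᵥ u) ≤ u ⬝ᵥ u) ∧
      (∀ q, (((a • 1 + H)⁻¹) ^ q).trace = (diagonal d ^ q).trace) ∧
      (∀ q (u : Fin c → ℝ), u ⬝ᵥ (((a • 1 + H)⁻¹) ^ (q + 1) *ᵥ u) =
        (V *ᵥ u) ⬝ᵥ (diagonal d ^ q *ᵥ (V *ᵥ u))) := by
  obtain ⟨O, μ, h1, h2, hμ, rfl⟩ := hH.spectral
  have p1 : ∀ i, 0 < a + μ i := fun i => by linarith [hμ i]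
  rw [resolvent_spectral h1 h2 (fun i => (p1 i).ne')]
  set d : Fin c → ℝ := fun i => (a + μ i)⁻¹ with hd
  have hd0 : ∀ i, 0 ≤ d i := fun i => (inv_pos.2 (p1 i)).le
  have hd1 : ∀ i, d i ≤ 1 := fun i => inv_le_one_of_one_le₀ (by linarith [hμ i])
  have hsq : ∀ i, Real.sqrt (d i) * Real.sqrt (d i) = d i := fun i => Real.mul_self_sqrt (hd0 i)
  refine ⟨diagonal (fun i => Real.sqrt (d i)) * Oᵀ, d, ?_, ?_, ?_, hd0, ?_, ?_, ?_⟩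
  · rw [Matrix.transpose_mul, Matrix.diagonal_transpose, Matrix.transpose_transpose]
    have : diagonal d = diagonal (fun i => Real.sqrt (d i)) * diagonal (fun i => Real.sqrt (d i)) := by
      rw [Matrix.diagonal_mul_diagonal]; simp [hsq]
    rw [this]
    simp only [mul_assoc]
  · rw [Matrix.transpose_mul, Matrix.diagonal_transpose, Matrix.transpose_transpose, mul_assoc,
      ← mul_assoc Oᵀ, h1, one_mul, Matrix.diagonal_mul_diagonal]
    simp [hsq]
  · rw [← resolvent_spectral h1 h2 (fun i => (p1 i).ne')]
    refine Matrix.mul_nonsing_inv _ ?_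
    have := resolvent_spectral h1 h2 (fun i => (p1 i).ne')
    by_contra hdet
    have e0 := Matrix.nonsing_inv_apply_not_isUnit _ hdet
    rw [this] at e0
    have e1 : diagonal d = 0 := by
      calc diagonal d = (Oᵀ * O) * diagonal d * (Oᵀ * O) := by rw [h1]; simp
        _ = Oᵀ * (O * diagonal d * Oᵀ) * O := by simp only [mul_assoc]
        _ = 0 := by rw [e0]; simp
    rcases isEmpty_or_nonempty (Fin c) with hc | ⟨⟨i⟩⟩
    · exact hdet (by simp)
    · have := congrFun (congrFun e1 i) i
      simp [hd] at this
      exact (p1 i).ne' this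
  · intro u
    have e1 : u ⬝ᵥ u = (Oᵀ *ᵥ u) ⬝ᵥ (Oᵀ *ᵥ u) := by
      rw [Matrix.dotProduct_mulVec, Matrix.vecMul_transpose, Matrix.mulVec_mulVec, h2,
        Matrix.one_mulVec]
    rw [e1, ← Matrix.mulVec_mulVec]
    simp only [dotProduct, Matrix.mulVec_diagonal]
    refine Finset.sum_le_sum fun i _ => ?_
    have := mul_le_mul_of_nonneg_right (hd1 i) (mul_self_nonneg ((Oᵀ *ᵥ u) i))
    calc _ = (Real.sqrt (d i) * Real.sqrt (d i)) * ((Oᵀ *ᵥ u) i * (Oᵀ *ᵥ u) i) := by ring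
      _ ≤ _ := by rw [hsq]; linarith
  · intro q
    rw [conj_diagonal_pow h1 h2, trace_conj_diagonal h1, Matrix.diagonal_pow,
      Matrix.trace_diagonal]
    rfl
  · intro q u
    rw [conj_diagonal_pow h1 h2, ← Matrix.mulVec_mulVec, ← Matrix.mulVec_mulVec,
      Matrix.dotProduct_mulVec, ← Matrix.mulVec_transpose, ← Matrix.mulVec_mulVec,
      Matrix.diagonal_pow]
    simp only [dotProduct, Matrix.mulVec_diagonal, Pi.pow_apply]
    refine Finset.sum_congr rfl fun i _ => ?_
    rw [pow_succ]
    nth_rewrite 2 [← hsq i]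
    ring

lemma resolvent_quad_nonneg {c : ℕ} {H : Matrix (Fin c) (Fin c) ℝ} (hH : PSD H) {a : ℝ}
    (ha : 1 ≤ a) (q : ℕ) (u : Fin c → ℝ) :
    0 ≤ u ⬝ᵥ (((a • 1 + H)⁻¹) ^ (q + 1) *ᵥ u) := by
  obtain ⟨V, d, _, _, _, hd, _, _, hq⟩ := resolvent_factor hH ha
  rw [hq, Matrix.diagonal_pow]
  simp only [dotProduct, Matrix.mulVec_diagonal, Pi.pow_apply]
  refine Finset.sum_nonneg fun i _ => ?_
  have := pow_nonneg (hd i) q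
  nlinarith [mul_nonneg this (mul_self_nonneg ((V *ᵥ u) i))]

/-- Effect of a rank-one update on the potential: the resolvent factors as `Vᵀ Y V` by
Sherman–Morrison, and the Lieb–Thirring inequality separates the powers of `V Vᵀ` and `Y`. -/
lemma potential_rankOne {c : ℕ} {H : Matrix (Fin c) (Fin c) ℝ} (hH : PSD H) {a : ℝ}
    (ha : 1 ≤ a) (u : Fin c → ℝ) {g : ℝ} (hg : 0 ≤ g) (k : ℕ) :
    potential (2 ^ k) a (g • vecMulVec u u + H) ≤ potential (2 ^ k) a H -
      ((2 ^ k : ℕ) : ℝ) * g / (1 + ((2 ^ k : ℕ) : ℝ) * (g * (u ⬝ᵥ u))) *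
        (u ⬝ᵥ (((a • 1 + H)⁻¹) ^ (2 ^ k + 1) *ᵥ u)) := by
  have hquad := resolvent_quad_nonneg hH ha (2 ^ k) u
  obtain ⟨V, d, hR, hVV, hinv, hd, hcon, htr, hq⟩ := resolvent_factor hH ha
  set B := a • (1 : Matrix (Fin c) (Fin c) ℝ) + H with hB
  set R := B⁻¹ with hRdef
  set y := V *ᵥ u with hy
  set t := g / (1 + g * (y ⬝ᵥ y)) with ht
  have hyy : 0 ≤ y ⬝ᵥ y := by simpa using dotProduct_star_self_nonneg y
  have hz : Vᵀ *ᵥ y = R *ᵥ u := by rw [hy, Matrix.mulVec_mulVec, hR]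
  have hRs : Rᵀ = R := by rw [hR, Matrix.transpose_mul, Matrix.transpose_transpose]
  have hinv' : (a • 1 + (g • vecMulVec u u + H))⁻¹ = Vᵀ * (1 - t • vecMulVec y y) * V := by
    refine Matrix.inv_eq_right_inv ?_
    have e1 : Vᵀ * (1 - t • vecMulVec y y) * V = R - t • vecMulVec (R *ᵥ u) (R *ᵥ u) := by
      rw [mul_sub, mul_one, sub_mul, ← hR, mul_smul_comm, Matrix.mul_vecMulVec, smul_mul_assoc,
        Matrix.vecMulVec_mul, hz, ← Matrix.mulVec_transpose, hz]
    have e2 : a • 1 + (g • vecMulVec u u + H) = B + g • vecMulVec u u := by rw [hB]; abel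
    have e3 : u ⬝ᵥ (R *ᵥ u) = y ⬝ᵥ y := by
      rw [hR, ← Matrix.mulVec_mulVec, Matrix.dotProduct_mulVec, ← Matrix.mulVec_transpose,
        Matrix.transpose_transpose]
    have e4 : u ᵥ* R = R *ᵥ u := by rw [← Matrix.mulVec_transpose, hRs]
    rw [e1, e2, mul_sub, add_mul, hinv, smul_mul_assoc, Matrix.vecMulVec_mul, e4, mul_smul_comm,
      add_mul, Matrix.mul_vecMulVec, Matrix.mulVec_mulVec, hinv, Matrix.one_mulVec,
      smul_mul_assoc, Matrix.vecMulVec_mul_vecMulVec, e3, Matrix.vecMulVec_smul]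
    have e5 : g - t - t * (g * (y ⬝ᵥ y)) = 0 := by
      rw [ht]; field_simp; ring
    calc _ = 1 + (g - t - t * (g * (y ⬝ᵥ y))) • vecMulVec u (R *ᵥ u) := by module
      _ = 1 := by rw [e5]; simp
  obtain ⟨τ, hτ, hτle⟩ := rankOne_pow y hg (2 ^ k)
  rw [← ht] at hτ
  have hmain : potential (2 ^ k) a (g • vecMulVec u u + H) ≤
      (diagonal d ^ (2 ^ k)).trace - τ * (y ⬝ᵥ (diagonal d ^ (2 ^ k) *ᵥ y)) := by
    calc potential (2 ^ k) a (g • vecMulVec u u + H)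
        = ((V * (Vᵀ * (1 - t • vecMulVec y y))) ^ (2 ^ k)).trace := by
          rw [potential, hinv', trace_pow_mul_comm]
      _ = ((diagonal d * (1 - t • vecMulVec y y)) ^ (2 ^ k)).trace := by
          rw [← mul_assoc, hVV]
      _ ≤ (diagonal d ^ (2 ^ k) * (1 - t • vecMulVec y y) ^ (2 ^ k)).trace :=
          lieb_thirring k _ _ (by simp) (by
            rw [Matrix.transpose_sub, Matrix.transpose_one, Matrix.transpose_smul,
              Matrix.transpose_vecMulVec])
      _ = _ := by
          rw [hτ, mul_sub, mul_one, mul_smul_comm, Matrix.mul_vecMulVec, Matrix.trace_sub,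
            Matrix.trace_smul, Matrix.trace_vecMulVec, dotProduct_comm, smul_eq_mul]
  refine hmain.trans ?_
  rw [← htr, potential, hq] at *
  have hle : ((2 ^ k : ℕ) : ℝ) * g / (1 + ((2 ^ k : ℕ) : ℝ) * (g * (u ⬝ᵥ u))) ≤ τ := by
    refine le_trans ?_ hτle
    gcongr
    exact hcon u
  have := mul_le_mul_of_nonneg_right hle hquad
  linarith

/-- Averaging the rank-one step: a fresh draw pays for a shift of size
`1 / (M (1 + q β))` of the resolvent. -/
lemma potential_average {n c : ℕ} {U : Matrix (Fin n) (Fin c) ℝ} (hU : Uᵀ * U = 1)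
    {π g : Fin n → ℝ} {M β : ℝ} (hM : 0 < M) (hβ : 0 ≤ β) (hπ : ∀ i, 0 ≤ π i)
    (hπ1 : ∑ i, π i = 1) (hg : ∀ i, 0 ≤ g i) (hπg : ∀ i, 1 / M ≤ π i * g i)
    (hgβ : ∀ i, g i * (U i ⬝ᵥ U i) ≤ β)
    {H : Matrix (Fin c) (Fin c) ℝ} (hH : PSD H) {a : ℝ} (ha : 1 ≤ a) (k : ℕ) :
    ∑ i, π i * potential (2 ^ k) a (g i • vecMulVec (U i) (U i) + H) ≤
      potential (2 ^ k) (a + 1 / (M * (1 + ((2 ^ k : ℕ) : ℝ) * β))) H := by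
  -- The shift `η` is chosen so that its first-order cost `q η tr R^(q+1)` matches the mean gain.
  set q := 2 ^ k with hq
  have hshift := potential_shift hH (η := 1 / (M * (1 + (q : ℝ) * β))) (lt_of_lt_of_le one_pos ha)
    (by positivity) q
  refine le_trans ?_ hshift
  set R := (a • (1 : Matrix (Fin c) (Fin c) ℝ) + H)⁻¹ with hR
  have hterm : ∀ i, π i * potential q a (g i • vecMulVec (U i) (U i) + H) ≤
      π i * potential q a H - q * (1 / (M * (1 + q * β))) * (U i ⬝ᵥ (R ^ (q + 1) *ᵥ U i)) := by
    intro i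
    have h1 := potential_rankOne hH ha (U i) (hg i) k
    rw [← hq, ← hR] at h1
    have h2 := mul_le_mul_of_nonneg_left h1 (hπ i)
    refine h2.trans ?_
    have hquad := resolvent_quad_nonneg hH ha q (U i)
    rw [← hR] at hquad
    have huu : 0 ≤ U i ⬝ᵥ U i := by simpa using dotProduct_star_self_nonneg (U i)
    have hgu : 0 ≤ g i * (U i ⬝ᵥ U i) := mul_nonneg (hg i) huu
    have h3 : (q : ℝ) * (1 / (M * (1 + q * β))) ≤
        π i * (q * g i / (1 + q * (g i * (U i ⬝ᵥ U i)))) := by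
      calc (q : ℝ) * (1 / (M * (1 + q * β))) = (q * (1 / M)) / (1 + q * β) := by
            field_simp
        _ ≤ (q * (π i * g i)) / (1 + q * (g i * (U i ⬝ᵥ U i))) := by
            have h0 : 0 ≤ π i * g i := mul_nonneg (hπ i) (hg i)
            gcongr
            · exact hπg i
            · exact hgβ i
        _ = _ := by ring
    have h4 := mul_le_mul_of_nonneg_right h3 hquad
    rw [mul_sub]
    linarith
  refine (Finset.sum_le_sum fun i _ => hterm i).trans ?_
  rw [Finset.sum_sub_distrib, ← Finset.sum_mul, hπ1, one_mul, ← Finset.mul_sum]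
  have htrace : ∑ i, U i ⬝ᵥ (R ^ (q + 1) *ᵥ U i) = potential (q + 1) a H := by
    have : ∑ i, U i ⬝ᵥ (R ^ (q + 1) *ᵥ U i) = (U * (R ^ (q + 1) * Uᵀ)).trace := by
      simp only [Matrix.trace, Matrix.diag_apply]
      refine Finset.sum_congr rfl fun i _ => ?_
      rw [Matrix.mul_apply_eq_vecMul]
      simp only [dotProduct, Matrix.mulVec, Matrix.vecMul, Matrix.mul_apply, Matrix.transpose_apply]
    rw [this, Matrix.trace_mul_comm, Matrix.mul_assoc, hU, mul_one]
    rfl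
  rw [htrace]

/-- Supermartingale property of the shifted potential. -/
lemma potential_sample {n c : ℕ} {U : Matrix (Fin n) (Fin c) ℝ} (hU : Uᵀ * U = 1)
    {π g : Fin n → ℝ} {M β : ℝ} (hM : 0 < M) (hβ : 0 ≤ β) (hπ : ∀ i, 0 ≤ π i)
    (hπ1 : ∑ i, π i = 1) (hg : ∀ i, 0 ≤ g i) (hπg : ∀ i, 1 / M ≤ π i * g i)
    (hgβ : ∀ i, g i * (U i ⬝ᵥ U i) ≤ β) (k N : ℕ) {a : ℝ} (ha : 1 ≤ a) :
    ∀ {H : Matrix (Fin c) (Fin c) ℝ}, PSD H →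
    ∑ ω : Fin N → Fin n, samplingP π ω * potential (2 ^ k) a (H + sampleGram U g ω) ≤
      potential (2 ^ k) (a + N * (1 / (M * (1 + ((2 ^ k : ℕ) : ℝ) * β)))) H := by
  induction N with
  | zero => intro H hH; simp [samplingP, sampleGram]
  | succ N ih =>
    intro H hH
    rw [sum_sample π 0]
    have hη : 0 ≤ 1 / (M * (1 + ((2 ^ k : ℕ) : ℝ) * β)) := by positivity
    calc _ ≤ ∑ i, π i * potential (2 ^ k) (a + N * (1 / (M * (1 + ((2 ^ k : ℕ) : ℝ) * β))))
            (g i • vecMulVec (U i) (U i) + H) := by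
          refine Finset.sum_le_sum fun i _ => mul_le_mul_of_nonneg_left ?_ (hπ i)
          have := ih ((PSD.rankOne (hg i) (U i)).add hH)
          refine le_trans (le_of_eq ?_) this
          refine Finset.sum_congr rfl fun ω _ => ?_
          rw [sampleGram_insertNth]
          congr 2
          abel
      _ ≤ _ := potential_average hU hM hβ hπ hπ1 hg hπg hgβ hH
          (by nlinarith [mul_nonneg (Nat.cast_nonneg (α := ℝ) N) hη]) k
      _ = _ := by
          congr 1
          push_cast
          ring

/-- The event that the sampled Gram matrix is at least `1/2` times the identity. -/
def goodSet {n c m : ℕ} (U : Matrix (Fin n) (Fin c) ℝ) (g : Fin n → ℝ) :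
    Finset (Fin m → Fin n) :=
  open Classical in {ω | ∀ x : Fin c → ℝ, 1 / 2 * (x ⬝ᵥ x) ≤ x ⬝ᵥ (sampleGram U g ω *ᵥ x)}

lemma mem_goodSet {n c m : ℕ} {U : Matrix (Fin n) (Fin c) ℝ} {g : Fin n → ℝ}
    {ω : Fin m → Fin n} : ω ∈ goodSet U g ↔
      ∀ x : Fin c → ℝ, 1 / 2 * (x ⬝ᵥ x) ≤ x ⬝ᵥ (sampleGram U g ω *ᵥ x) := by
  simp [goodSet]

/-- Markov's inequality for the potential: a sample outside `goodSet` has potential at least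
`(2/3)^q`, while its mean is at most `c (5/9)^q` for `q = 2^k`. -/
lemma prob_bad_le {n c : ℕ} {U : Matrix (Fin n) (Fin c) ℝ} (hU : Uᵀ * U = 1)
    {π g : Fin n → ℝ} {M β : ℝ} (hM : 0 < M) (hβ : 0 ≤ β) (hπ : ∀ i, 0 ≤ π i)
    (hπ1 : ∑ i, π i = 1) (hg : ∀ i, 0 ≤ g i) (hπg : ∀ i, 1 / M ≤ π i * g i)
    (hgβ : ∀ i, g i * (U i ⬝ᵥ U i) ≤ β) (k N : ℕ)
    (hN : (4 : ℝ) / 5 ≤ N * (1 / (M * (1 + ((2 ^ k : ℕ) : ℝ) * β)))) :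
    ∑ ω ∈ (goodSet U g : Finset (Fin N → Fin n))ᶜ, samplingP π ω ≤
      c * (5 / 6 : ℝ) ^ (2 ^ k) := by
  have h1 := potential_sample hU hM hβ hπ hπ1 hg hπg hgβ k N le_rfl PSD.zero
  have hpos : (0 : ℝ) < 1 + N * (1 / (M * (1 + ((2 ^ k : ℕ) : ℝ) * β))) := by linarith
  rw [potential_zero hpos] at h1
  have h2 : ∑ ω ∈ (goodSet U g : Finset (Fin N → Fin n))ᶜ,
      samplingP π ω * ((1 + 1 / 2 : ℝ)⁻¹) ^ (2 ^ k) ≤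
      ∑ ω : Fin N → Fin n, samplingP π ω * potential (2 ^ k) 1 (0 + sampleGram U g ω) := by
    refine le_trans (Finset.sum_le_sum fun ω hω => ?_)
      (Finset.sum_le_sum_of_subset_of_nonneg (Finset.subset_univ _) fun ω _ _ =>
        mul_nonneg (samplingP_nonneg hπ ω) (potential_nonneg (PSD.zero.add
          (sampleGram_PSD U hg ω)) one_pos _))
    refine mul_le_mul_of_nonneg_left ?_ (samplingP_nonneg hπ ω)
    rw [zero_add]
    refine potential_lower (sampleGram_PSD U hg ω) one_pos _ ?_
    rwa [Finset.mem_compl, mem_goodSet] at hω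
  rw [← Finset.sum_mul] at h2
  have h3 : (1 + N * (1 / (M * (1 + ((2 ^ k : ℕ) : ℝ) * β))))⁻¹ ≤ (5 / 9 : ℝ) := by
    rw [inv_le_comm₀ hpos (by norm_num)]; linarith
  have h4 : (c : ℝ) * ((1 + N * (1 / (M * (1 + ((2 ^ k : ℕ) : ℝ) * β))))⁻¹) ^ (2 ^ k) ≤
      c * (5 / 9 : ℝ) ^ (2 ^ k) := by gcongr
  have h5 := h2.trans (h1.trans h4)
  have e : (5 / 9 : ℝ) ^ (2 ^ k) = (5 / 6) ^ (2 ^ k) * ((1 + 1 / 2 : ℝ)⁻¹) ^ (2 ^ k) := by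
    rw [← mul_pow]; norm_num
  rw [e, ← mul_assoc] at h5
  exact le_of_mul_le_mul_right h5 (by positivity)

/-! ### Moments and inverses of the sampled Gram matrix -/

lemma dot_self_nonneg {c : ℕ} (x : Fin c → ℝ) : 0 ≤ x ⬝ᵥ x := by
  simpa using dotProduct_star_self_nonneg x

lemma dot_sq_le {c : ℕ} (x y : Fin c → ℝ) : (x ⬝ᵥ y) ^ 2 ≤ (x ⬝ᵥ x) * (y ⬝ᵥ y) := by
  have := Finset.sum_mul_sq_le_sq_mul_sq Finset.univ x y
  simpa [dotProduct, pow_two] using this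

lemma weighted_cauchy {ι : Type*} (s : Finset ι) (p a b : ι → ℝ) (hp : ∀ i ∈ s, 0 ≤ p i) :
    (∑ i ∈ s, p i * (a i * b i)) ^ 2 ≤ (∑ i ∈ s, p i * a i ^ 2) * ∑ i ∈ s, p i * b i ^ 2 := by
  have h := Finset.sum_mul_sq_le_sq_mul_sq s (fun i => Real.sqrt (p i) * a i)
    (fun i => Real.sqrt (p i) * b i)
  have hs : ∀ i ∈ s, Real.sqrt (p i) * Real.sqrt (p i) = p i := fun i hi =>
    Real.mul_self_sqrt (hp i hi)
  have e1 : ∑ i ∈ s, Real.sqrt (p i) * a i * (Real.sqrt (p i) * b i) =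
      ∑ i ∈ s, p i * (a i * b i) :=
    Finset.sum_congr rfl fun i hi => by rw [mul_mul_mul_comm, hs i hi]
  have e2 : ∀ f : ι → ℝ, ∑ i ∈ s, (Real.sqrt (p i) * f i) ^ 2 = ∑ i ∈ s, p i * f i ^ 2 :=
    fun f => Finset.sum_congr rfl fun i hi => by rw [mul_pow, pow_two (Real.sqrt _), hs i hi]
  rwa [e1, e2, e2] at h

lemma orth_dot {n c : ℕ} {U : Matrix (Fin n) (Fin c) ℝ} (hU : Uᵀ * U = 1) (x : Fin c → ℝ) :
    (U *ᵥ x) ⬝ᵥ (U *ᵥ x) = x ⬝ᵥ x := by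
  rw [Matrix.dotProduct_mulVec, ← Matrix.mulVec_transpose, Matrix.mulVec_mulVec, hU,
    Matrix.one_mulVec]

lemma orth_sum_sq {n c : ℕ} {U : Matrix (Fin n) (Fin c) ℝ} (hU : Uᵀ * U = 1) (x : Fin c → ℝ) :
    ∑ i, (U i ⬝ᵥ x) ^ 2 = x ⬝ᵥ x := by
  rw [← orth_dot hU x]
  simp only [dotProduct, Matrix.mulVec, pow_two]

lemma orth_transpose_le {n c : ℕ} {U : Matrix (Fin n) (Fin c) ℝ} (hU : Uᵀ * U = 1)
    (z : Fin n → ℝ) : (Uᵀ *ᵥ z) ⬝ᵥ (Uᵀ *ᵥ z) ≤ z ⬝ᵥ z := by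
  set y := Uᵀ *ᵥ z with hy
  have h := dot_self_nonneg (z - U *ᵥ y)
  have e : z ⬝ᵥ (U *ᵥ y) = y ⬝ᵥ y := by
    rw [Matrix.dotProduct_mulVec, ← Matrix.mulVec_transpose]
  rw [sub_dotProduct, dotProduct_sub, dotProduct_sub, orth_dot hU, dotProduct_comm (U *ᵥ y) z,
    e] at h
  linarith

/-- Debiased sampling setup in orthonormal coordinates: `U` has orthonormal columns, so that
`U i ⬝ᵥ U i` is the `i`-th leverage score, `g i = 1 / (m πᵢ - ℓᵢ)` is the debiased weight of a
draw of `i`, and `β` bounds every `ℓᵢ / (m πᵢ)`. -/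
structure Design {n c : ℕ} (U : Matrix (Fin n) (Fin c) ℝ) (π g : Fin n → ℝ) (m : ℕ) (β : ℝ) :
    Prop where
  orth : Uᵀ * U = 1
  pos : ∀ i, 0 < π i
  sum_one : ∑ i, π i = 1
  gpos : ∀ i, 0 < g i
  geq : ∀ i, m * π i * g i = 1 + g i * (U i ⬝ᵥ U i)
  gle : ∀ i, m * π i * g i ≤ 2
  glev : ∀ i, g i * (U i ⬝ᵥ U i) ≤ 2 * β
  bpos : 0 < β
  ble : β ≤ 1 / 2
  one_le : 1 ≤ m * β

/-- Mean square deviation of a sum of `N` draws of `f` from an arbitrary centre `b`: variance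
plus squared bias. -/
lemma sample_variance {n : ℕ} {π : Fin n → ℝ} (hπ1 : ∑ i, π i = 1) (f : Fin n → ℝ) (N : ℕ) :
    ∀ b : ℝ, ∑ ω : Fin N → Fin n, samplingP π ω * (∑ s, f (ω s) - b) ^ 2 =
      N * (∑ i, π i * f i ^ 2 - (∑ i, π i * f i) ^ 2) + (N * ∑ i, π i * f i - b) ^ 2 := by
  induction N with
  | zero => intro b; simp [samplingP]
  | succ N ih =>
    intro b
    rw [sum_sample π 0]
    set μ := ∑ i, π i * f i with hμ
    set ν := ∑ i, π i * f i ^ 2 with hν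
    have h : ∀ i, ∑ ω : Fin N → Fin n, samplingP π ω *
        (∑ s, f ((Fin.insertNth 0 i ω : Fin (N + 1) → Fin n) s) - b) ^ 2 =
        N * (ν - μ ^ 2) + (N * μ - (b - f i)) ^ 2 := by
      intro i
      rw [← ih]
      refine Finset.sum_congr rfl fun ω _ => ?_
      rw [Fin.sum_univ_succAbove _ 0]
      simp only [Fin.insertNth_apply_same, Fin.insertNth_apply_succAbove]
      ring
    simp only [h]
    have e : ∀ i, π i * (N * (ν - μ ^ 2) + (N * μ - (b - f i)) ^ 2) =
        (N * (ν - μ ^ 2) + (N * μ - b) ^ 2) * π i + 2 * (N * μ - b) * (π i * f i) +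
          π i * f i ^ 2 := fun i => by ring
    simp only [e]
    rw [Finset.sum_add_distrib, Finset.sum_add_distrib, ← Finset.mul_sum, ← Finset.mul_sum, hπ1,
      ← hμ, ← hν]
    push_cast
    ring

lemma sampleGram_mulVec {n c m : ℕ} (U : Matrix (Fin n) (Fin c) ℝ) (g : Fin n → ℝ)
    (ω : Fin m → Fin n) (x : Fin c → ℝ) (k : Fin c) :
    (sampleGram U g ω *ᵥ x) k = ∑ s, g (ω s) * (U (ω s) ⬝ᵥ x) * U (ω s) k := by
  rw [sampleGram, Matrix.sum_mulVec, Finset.sum_apply]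
  refine Finset.sum_congr rfl fun s _ => ?_
  rw [Matrix.smul_mulVec, Matrix.vecMulVec_mulVec]
  simp only [Pi.smul_apply, smul_eq_mul, MulOpposite.smul_eq_mul_unop, MulOpposite.unop_op]
  ring

lemma sampleGram_quad {n c m : ℕ} (U : Matrix (Fin n) (Fin c) ℝ) (g : Fin n → ℝ)
    (ω : Fin m → Fin n) (x : Fin c → ℝ) :
    x ⬝ᵥ (sampleGram U g ω *ᵥ x) = ∑ s, g (ω s) * (U (ω s) ⬝ᵥ x) ^ 2 := by
  rw [sampleGram, Matrix.sum_mulVec, dotProduct_sum]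
  exact Finset.sum_congr rfl fun s _ => dotProduct_rankOne _ _ _

/-- Mean-square deviation of the leave-one-out Gram matrix from the identity, along one vector. -/
lemma Design.second_moment {n c N : ℕ} {U : Matrix (Fin n) (Fin c) ℝ} {π g : Fin n → ℝ} {β : ℝ}
    (D : Design U π g (N + 1) β) (u : Fin c → ℝ) :
    ∑ ω : Fin N → Fin n, samplingP π ω *
      ((sampleGram U g ω *ᵥ u - u) ⬝ᵥ (sampleGram U g ω *ᵥ u - u)) ≤ 6 * β * (u ⬝ᵥ u) := by
  have hβ := D.bpos
  have hm : (0 : ℝ) < ((N + 1 : ℕ) : ℝ) := by positivity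
  have e1 : ∀ ω : Fin N → Fin n, samplingP π ω *
      ((sampleGram U g ω *ᵥ u - u) ⬝ᵥ (sampleGram U g ω *ᵥ u - u)) =
      ∑ k, samplingP π ω * (∑ s, g (ω s) * (U (ω s) ⬝ᵥ u) * U (ω s) k - u k) ^ 2 := by
    intro ω
    rw [← Finset.mul_sum]
    simp only [dotProduct, Pi.sub_apply]
    congr 1
    exact Finset.sum_congr rfl fun k _ => by rw [sampleGram_mulVec]; simp only [dotProduct]; ring
  simp only [e1]
  rw [Finset.sum_comm]
  have e2 : ∀ k, ∑ ω : Fin N → Fin n,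
      samplingP π ω * (∑ s, g (ω s) * (U (ω s) ⬝ᵥ u) * U (ω s) k - u k) ^ 2 ≤
      ∑ i, (N * π i * g i * (g i * (U i ⬝ᵥ u) ^ 2)) * (U i k * U i k) +
        ((Uᵀ *ᵥ fun i => (N * π i * g i - 1) * (U i ⬝ᵥ u)) k) ^ 2 := by
    intro k
    rw [sample_variance D.sum_one (fun i => g i * (U i ⬝ᵥ u) * U i k) N (u k)]
    have hb : N * ∑ i, π i * (g i * (U i ⬝ᵥ u) * U i k) - u k =
        (Uᵀ *ᵥ fun i => (N * π i * g i - 1) * (U i ⬝ᵥ u)) k := by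
      have hu : u k = ∑ i, U i k * (U i ⬝ᵥ u) := by
        have : (Uᵀ *ᵥ (U *ᵥ u)) k = u k := by rw [Matrix.mulVec_mulVec, D.orth, Matrix.one_mulVec]
        rw [← this]
        simp only [Matrix.mulVec, dotProduct, Matrix.transpose_apply]
      rw [hu]
      simp only [Matrix.mulVec, dotProduct, Matrix.transpose_apply]
      rw [Finset.mul_sum, ← Finset.sum_sub_distrib]
      exact Finset.sum_congr rfl fun i _ => by ring
    rw [hb]
    have h0 : (N : ℝ) * ∑ i, π i * (g i * (U i ⬝ᵥ u) * U i k) ^ 2 =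
        ∑ i, (N * π i * g i * (g i * (U i ⬝ᵥ u) ^ 2)) * (U i k * U i k) := by
      rw [Finset.mul_sum]
      exact Finset.sum_congr rfl fun i _ => by ring
    rw [mul_sub, h0]
    have : 0 ≤ (N : ℝ) * (∑ i, π i * (g i * (U i ⬝ᵥ u) * U i k)) ^ 2 := by positivity
    linarith
  refine (Finset.sum_le_sum fun k _ => e2 k).trans ?_
  rw [Finset.sum_add_distrib]
  have hNm : ∀ i, N * π i * g i = (N + 1 : ℕ) * π i * g i - π i * g i := fun i => by
    push_cast; ring
  have hpg : ∀ i, π i * g i ≤ 2 * β := by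
    intro i
    have h1 := D.gle i
    have h2 := D.one_le
    have h3 : 0 ≤ π i * g i := (mul_pos (D.pos i) (D.gpos i)).le
    nlinarith [mul_le_mul_of_nonneg_left h2 h3, mul_le_mul_of_nonneg_right h1 hβ.le]
  have hl : ∀ i, 0 ≤ g i * (U i ⬝ᵥ U i) := fun i =>
    mul_nonneg (D.gpos i).le (dot_self_nonneg _)
  have A : ∑ k, ∑ i, (N * π i * g i * (g i * (U i ⬝ᵥ u) ^ 2)) * (U i k * U i k) ≤
      4 * β * (u ⬝ᵥ u) := by
    rw [Finset.sum_comm, ← orth_sum_sq D.orth u, Finset.mul_sum]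
    refine Finset.sum_le_sum fun i _ => ?_
    rw [← Finset.mul_sum]
    change (N * π i * g i * (g i * (U i ⬝ᵥ u) ^ 2)) * (U i ⬝ᵥ U i) ≤ _
    have h3 : 0 ≤ π i * g i := (mul_pos (D.pos i) (D.gpos i)).le
    have h1 : N * π i * g i ≤ 2 := by rw [hNm]; linarith [D.gle i]
    have h5 : (N * π i * g i) * (g i * (U i ⬝ᵥ U i)) ≤ 2 * (2 * β) :=
      mul_le_mul h1 (D.glev i) (hl i) (by norm_num)
    have h6 := mul_le_mul_of_nonneg_right h5 (sq_nonneg (U i ⬝ᵥ u))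
    linarith
  have B : ∑ k, ((Uᵀ *ᵥ fun i => (N * π i * g i - 1) * (U i ⬝ᵥ u)) k) ^ 2 ≤
      2 * β * (u ⬝ᵥ u) := by
    have h := orth_transpose_le D.orth (fun i => (N * π i * g i - 1) * (U i ⬝ᵥ u))
    have e : ∀ x : Fin c → ℝ, ∑ k, x k ^ 2 = x ⬝ᵥ x := fun x => by simp [dotProduct, pow_two]
    rw [e]
    refine h.trans ?_
    rw [← orth_sum_sq D.orth u, Finset.mul_sum]
    refine Finset.sum_le_sum fun i _ => ?_
    have h3 : 0 ≤ π i * g i := (mul_pos (D.pos i) (D.gpos i)).le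
    have h4 : (N * π i * g i - 1) ^ 2 ≤ 2 * β := by
      have h7 : N * π i * g i - 1 = g i * (U i ⬝ᵥ U i) - π i * g i := by
        rw [hNm, D.geq]; ring
      rw [h7]
      have h8 : (g i * (U i ⬝ᵥ U i) - π i * g i) ^ 2 ≤ (2 * β) ^ 2 :=
        sq_le_sq' (by linarith [hpg i, hl i]) (by linarith [D.glev i])
      nlinarith [D.ble]
    have := mul_le_mul_of_nonneg_right h4 (sq_nonneg (U i ⬝ᵥ u))
    calc _ = (N * π i * g i - 1) ^ 2 * (U i ⬝ᵥ u) ^ 2 := by ring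
      _ ≤ _ := this
  linarith

/-- Facts about the inverse of a symmetric matrix bounded below by `1/2`. -/
lemma good_inverse {c : ℕ} {H : Matrix (Fin c) (Fin c) ℝ} (hs : Hᵀ = H)
    (hg : ∀ x : Fin c → ℝ, 1 / 2 * (x ⬝ᵥ x) ≤ x ⬝ᵥ (H *ᵥ x)) :
    IsUnit H.det ∧ (∀ v, H *ᵥ (H⁻¹ *ᵥ v) = v) ∧ (∀ v, H⁻¹ *ᵥ (H *ᵥ v) = v) ∧
    (∀ v w, v ⬝ᵥ (H⁻¹ *ᵥ w) = (H⁻¹ *ᵥ v) ⬝ᵥ w) ∧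
    (∀ v, (H⁻¹ *ᵥ v) ⬝ᵥ (H⁻¹ *ᵥ v) ≤ 4 * (v ⬝ᵥ v)) ∧
    (∀ v, 0 ≤ v ⬝ᵥ (H⁻¹ *ᵥ v)) ∧ (∀ v, v ⬝ᵥ (H⁻¹ *ᵥ v) ≤ 2 * (v ⬝ᵥ v)) := by
  have hdet : IsUnit H.det := by
    rw [isUnit_iff_ne_zero]
    intro h0
    obtain ⟨x, hx, hx0⟩ := Matrix.exists_mulVec_eq_zero_iff.2 h0
    have h := hg x
    rw [hx0, dotProduct_zero] at h
    have h2 := dot_self_nonneg x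
    exact hx (dotProduct_self_eq_zero.1 (by linarith))
  have h1 : ∀ v, H *ᵥ (H⁻¹ *ᵥ v) = v := fun v => by
    rw [Matrix.mulVec_mulVec, Matrix.mul_nonsing_inv _ hdet, Matrix.one_mulVec]
  have h2 : ∀ v, H⁻¹ *ᵥ (H *ᵥ v) = v := fun v => by
    rw [Matrix.mulVec_mulVec, Matrix.nonsing_inv_mul _ hdet, Matrix.one_mulVec]
  have hsymm : ∀ v w, v ⬝ᵥ (H⁻¹ *ᵥ w) = (H⁻¹ *ᵥ v) ⬝ᵥ w := fun v w => by
    rw [Matrix.dotProduct_mulVec, ← Matrix.mulVec_transpose, Matrix.transpose_nonsing_inv, hs]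
  have key : ∀ v, 1 / 2 * ((H⁻¹ *ᵥ v) ⬝ᵥ (H⁻¹ *ᵥ v)) ≤ v ⬝ᵥ (H⁻¹ *ᵥ v) := fun v => by
    have := hg (H⁻¹ *ᵥ v)
    rwa [h1, dotProduct_comm _ v] at this
  have key2 : ∀ v, (H⁻¹ *ᵥ v) ⬝ᵥ (H⁻¹ *ᵥ v) ≤ 4 * (v ⬝ᵥ v) := fun v => by
    have h3 := dot_self_nonneg (2 • v - H⁻¹ *ᵥ v)
    rw [sub_dotProduct, dotProduct_sub, dotProduct_sub, smul_dotProduct, dotProduct_smul,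
      smul_dotProduct, dotProduct_smul, dotProduct_comm (H⁻¹ *ᵥ v) v] at h3
    simp only [nsmul_eq_mul, Nat.cast_ofNat] at h3
    linarith [key v]
  refine ⟨hdet, h1, h2, hsymm, key2, fun v => ?_, fun v => ?_⟩
  · linarith [key v, dot_self_nonneg (H⁻¹ *ᵥ v)]
  · have h3 := dot_self_nonneg (v - (1 / 2 : ℝ) • (H⁻¹ *ᵥ v))
    rw [sub_dotProduct, dotProduct_sub, dotProduct_sub, smul_dotProduct, dotProduct_smul,
      smul_dotProduct, dotProduct_smul, dotProduct_comm (H⁻¹ *ᵥ v) v] at h3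
    simp only [smul_eq_mul] at h3
    linarith [key2 v]

/-! ### Leave-one-out estimate for the conditional mean of sketched least squares -/

/-- `K` is at least `1/2` times the identity, as a quadratic form. -/
def HalfLower {c : ℕ} (K : Matrix (Fin c) (Fin c) ℝ) : Prop :=
  ∀ x : Fin c → ℝ, 1 / 2 * (x ⬝ᵥ x) ≤ x ⬝ᵥ (K *ᵥ x)

/-- Exchangeability of the draws: a sum over draws reduces to one fresh draw `i` together with an
independent sample of one draw fewer. -/
lemma sum_leave_one_out {n c N : ℕ} (U : Matrix (Fin n) (Fin c) ℝ) (π g : Fin n → ℝ)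
    (f : Fin n → Matrix (Fin c) (Fin c) ℝ → ℝ) :
    ∑ ω : Fin (N + 1) → Fin n, samplingP π ω * ∑ s, f (ω s) (sampleGram U g ω) =
      ∑ i, ∑ ω : Fin N → Fin n, ((N + 1 : ℕ) * π i * samplingP π ω) *
        f i (g i • vecMulVec (U i) (U i) + sampleGram U g ω) := by
  simp only [Finset.mul_sum]
  rw [Finset.sum_comm]
  have h : ∀ s : Fin (N + 1),
      ∑ ω : Fin (N + 1) → Fin n, samplingP π ω * f (ω s) (sampleGram U g ω) =
      ∑ i, π i * ∑ ω : Fin N → Fin n, samplingP π ω *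
        f i (g i • vecMulVec (U i) (U i) + sampleGram U g ω) := by
    intro s
    rw [sum_sample π s]
    simp only [sampleGram_insertNth, Fin.insertNth_apply_same]
  simp only [h, Finset.sum_const, Finset.card_univ, Fintype.card_fin, nsmul_eq_mul,
    Finset.mul_sum]
  exact Finset.sum_congr rfl fun i _ => Finset.sum_congr rfl fun ω _ => by ring

lemma rankOne_mulVec {c : ℕ} (u x : Fin c → ℝ) (a : ℝ) :
    (a • vecMulVec u u) *ᵥ x = (a * (u ⬝ᵥ x)) • u := by
  ext k
  rw [Matrix.smul_mulVec, Matrix.vecMulVec_mulVec]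
  simp only [Pi.smul_apply, smul_eq_mul, MulOpposite.smul_eq_mul_unop, MulOpposite.unop_op]
  ring

lemma HalfLower.add_rankOne {c : ℕ} {H : Matrix (Fin c) (Fin c) ℝ} (h : HalfLower H)
    {a : ℝ} (ha : 0 ≤ a) (u : Fin c → ℝ) : HalfLower (a • vecMulVec u u + H) := by
  intro x
  rw [Matrix.add_mulVec, dotProduct_add, dotProduct_rankOne]
  have := h x
  have : 0 ≤ a * (u ⬝ᵥ x) ^ 2 := by positivity
  linarith

lemma sampleGram_symm {n c m : ℕ} (U : Matrix (Fin n) (Fin c) ℝ) (g : Fin n → ℝ)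
    (ω : Fin m → Fin n) : (sampleGram U g ω)ᵀ = sampleGram U g ω := by
  simp [sampleGram, Matrix.transpose_sum, Matrix.transpose_vecMulVec]

/-- Sherman–Morrison, applied to the updating vector itself. -/
lemma sherman_morrison {c : ℕ} {H : Matrix (Fin c) (Fin c) ℝ} (hs : Hᵀ = H) (h : HalfLower H)
    {a : ℝ} (ha : 0 ≤ a) (u : Fin c → ℝ) :
    (a • vecMulVec u u + H)⁻¹ *ᵥ u = (1 + a * (u ⬝ᵥ (H⁻¹ *ᵥ u)))⁻¹ • (H⁻¹ *ᵥ u) := by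
  obtain ⟨_, h1, _, _, _, h2, _⟩ := good_inverse hs h
  have hK : (a • vecMulVec u u + H)ᵀ = a • vecMulVec u u + H := by
    rw [Matrix.transpose_add, Matrix.transpose_smul, Matrix.transpose_vecMulVec, hs]
  obtain ⟨_, _, k2, _⟩ := good_inverse hK (h.add_rankOne ha u)
  have hpos : 0 < 1 + a * (u ⬝ᵥ (H⁻¹ *ᵥ u)) := by
    have := mul_nonneg ha (h2 u)
    linarith
  have e : (a • vecMulVec u u + H) *ᵥ (H⁻¹ *ᵥ u) = (1 + a * (u ⬝ᵥ (H⁻¹ *ᵥ u))) • u := by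
    rw [Matrix.add_mulVec, rankOne_mulVec, h1, add_smul, one_smul, add_comm]
  have := k2 (H⁻¹ *ᵥ u)
  rw [e, Matrix.mulVec_smul] at this
  exact (eq_inv_smul_iff₀ hpos.ne').2 this

/-- Part of the leave-one-out expansion where the reduced sample is already well conditioned. The
debiased weights make the deviation `e = mπg/(1+gρ) - 1` equal to `g(ℓ-ρ)/(1+gρ)`, where `ρ`
estimates the leverage score `ℓ` from the reduced sample, so it has second moment `O(β³)`. -/
lemma Design.good_part {n c N : ℕ} {U : Matrix (Fin n) (Fin c) ℝ} {π g : Fin n → ℝ} {β : ℝ}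
    (D : Design U π g (N + 1) β) (w : Fin n → ℝ) (hw : Uᵀ *ᵥ w = 0) (v : Fin c → ℝ) :
    (∑ i, ∑ ω ∈ (goodSet U g : Finset (Fin N → Fin n)), ((N + 1 : ℕ) * π i * samplingP π ω) *
      (g i * w i * (v ⬝ᵥ ((g i • vecMulVec (U i) (U i) + sampleGram U g ω)⁻¹ *ᵥ U i)))) ^ 2 ≤
      384 * β ^ 3 * (v ⬝ᵥ v) * (w ⬝ᵥ w) := by
  have hP : ∀ ω : Fin N → Fin n, 0 ≤ samplingP π ω := samplingP_nonneg fun i => (D.pos i).le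
  set ρ : Fin n → (Fin N → Fin n) → ℝ := fun i ω => U i ⬝ᵥ ((sampleGram U g ω)⁻¹ *ᵥ U i) with hρ
  set e : Fin n → (Fin N → Fin n) → ℝ := fun i ω =>
    (N + 1 : ℕ) * π i * g i * (1 + g i * ρ i ω)⁻¹ - 1 with he
  have hinv : ∀ ω ∈ (goodSet U g : Finset (Fin N → Fin n)), _ := fun ω hω =>
    good_inverse (sampleGram_symm U g ω) (mem_goodSet.1 hω)
  have e1 : ∑ i, ∑ ω ∈ (goodSet U g : Finset (Fin N → Fin n)),
      ((N + 1 : ℕ) * π i * samplingP π ω) *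
      (g i * w i * (v ⬝ᵥ ((g i • vecMulVec (U i) (U i) + sampleGram U g ω)⁻¹ *ᵥ U i))) =
      ∑ q ∈ (goodSet U g : Finset (Fin N → Fin n)) ×ˢ (Finset.univ : Finset (Fin n)),
        samplingP π q.1 * ((v ⬝ᵥ ((sampleGram U g q.1)⁻¹ *ᵥ U q.2)) * (w q.2 * e q.2 q.1)) := by
    rw [Finset.sum_comm, Finset.sum_product]
    refine Finset.sum_congr rfl fun ω hω => ?_
    -- Subtracting `1` in `e` is free, because `w` is orthogonal to the columns of `U`.
    have hz : ∑ i, samplingP π ω * ((v ⬝ᵥ ((sampleGram U g ω)⁻¹ *ᵥ U i)) * w i) = 0 := by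
      obtain ⟨_, _, _, hsy, _⟩ := hinv ω hω
      have : ∑ i, samplingP π ω * ((v ⬝ᵥ ((sampleGram U g ω)⁻¹ *ᵥ U i)) * w i) =
          samplingP π ω * (((sampleGram U g ω)⁻¹ *ᵥ v) ⬝ᵥ (Uᵀ *ᵥ w)) := by
        rw [Matrix.dotProduct_mulVec, Matrix.vecMul_transpose, ← Finset.mul_sum]
        congr 1
        refine Finset.sum_congr rfl fun i _ => ?_
        rw [hsy, dotProduct_comm]; rfl
      rw [this, hw, dotProduct_zero, mul_zero]
    rw [← add_zero (∑ i, samplingP π ω * _), ← hz, ← Finset.sum_add_distrib]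
    refine Finset.sum_congr rfl fun i _ => ?_
    rw [sherman_morrison (sampleGram_symm U g ω) (mem_goodSet.1 hω) (D.gpos i).le,
      dotProduct_smul, smul_eq_mul]
    simp only [he, hρ]
    ring
  rw [e1]
  refine (weighted_cauchy _ _ _ _ fun q _ => hP q.1).trans ?_
  have A : ∑ q ∈ (goodSet U g : Finset (Fin N → Fin n)) ×ˢ (Finset.univ : Finset (Fin n)),
      samplingP π q.1 * (v ⬝ᵥ ((sampleGram U g q.1)⁻¹ *ᵥ U q.2)) ^ 2 ≤ 4 * (v ⬝ᵥ v) := by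
    rw [Finset.sum_product]
    calc _ ≤ ∑ ω ∈ (goodSet U g : Finset (Fin N → Fin n)), samplingP π ω * (4 * (v ⬝ᵥ v)) := by
          refine Finset.sum_le_sum fun ω hω => ?_
          obtain ⟨_, _, _, hsy, h4, _⟩ := hinv ω hω
          change ∑ i, samplingP π ω * (v ⬝ᵥ ((sampleGram U g ω)⁻¹ *ᵥ U i)) ^ 2 ≤ _
          rw [← Finset.mul_sum]
          refine mul_le_mul_of_nonneg_left ?_ (hP ω)
          refine le_trans (le_of_eq ?_) (h4 v)
          rw [← orth_sum_sq D.orth]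
          exact Finset.sum_congr rfl fun i _ => by rw [hsy, dotProduct_comm]
      _ ≤ ∑ ω : Fin N → Fin n, samplingP π ω * (4 * (v ⬝ᵥ v)) :=
          Finset.sum_le_sum_of_subset_of_nonneg (Finset.subset_univ _) fun ω _ _ =>
            mul_nonneg (hP ω) (by linarith [dot_self_nonneg v])
      _ = 4 * (v ⬝ᵥ v) := by rw [← Finset.sum_mul, samplingP_sum D.sum_one, one_mul]
  have B : ∑ q ∈ (goodSet U g : Finset (Fin N → Fin n)) ×ˢ (Finset.univ : Finset (Fin n)),
      samplingP π q.1 * (w q.2 * e q.2 q.1) ^ 2 ≤ 96 * β ^ 3 * (w ⬝ᵥ w) := by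
    rw [Finset.sum_product_right]
    have : 96 * β ^ 3 * (w ⬝ᵥ w) = ∑ i, 96 * β ^ 3 * (w i * w i) := by
      rw [← Finset.mul_sum]; rfl
    rw [this]
    refine Finset.sum_le_sum fun i _ => ?_
    have hg := D.gpos i
    have hl := dot_self_nonneg (U i)
    calc ∑ ω ∈ (goodSet U g : Finset (Fin N → Fin n)), samplingP π ω * (w i * e i ω) ^ 2
        ≤ ∑ ω ∈ (goodSet U g : Finset (Fin N → Fin n)),
          (w i ^ 2 * (g i ^ 2 * (4 * (U i ⬝ᵥ U i)))) * (samplingP π ω *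
            ((sampleGram U g ω *ᵥ U i - U i) ⬝ᵥ (sampleGram U g ω *ᵥ U i - U i))) := by
          refine Finset.sum_le_sum fun ω hω => ?_
          obtain ⟨_, _, h2, hsy, h4, h5, _⟩ := hinv ω hω
          set d := sampleGram U g ω *ᵥ U i - U i with hd
          have hr : 0 ≤ ρ i ω := h5 (U i)
          have hden : 1 ≤ 1 + g i * ρ i ω := by
            have := mul_nonneg hg.le hr
            linarith
          -- The debiasing identity `mπg = 1 + gℓ` cancels the leading term of `e`.
          have hee : e i ω = g i * (U i ⬝ᵥ U i - ρ i ω) * (1 + g i * ρ i ω)⁻¹ := by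
            simp only [he]
            rw [D.geq]
            field_simp
            ring
          have hdiff : U i ⬝ᵥ U i - ρ i ω = ((sampleGram U g ω)⁻¹ *ᵥ U i) ⬝ᵥ d := by
            rw [hd, dotProduct_sub, ← hsy, ← hsy, h2]
          have hsq : (U i ⬝ᵥ U i - ρ i ω) ^ 2 ≤ 4 * (U i ⬝ᵥ U i) * (d ⬝ᵥ d) := by
            rw [hdiff]
            exact (dot_sq_le _ _).trans
              (mul_le_mul_of_nonneg_right (h4 _) (dot_self_nonneg d))
          have hi1 : ((1 + g i * ρ i ω)⁻¹) ^ 2 ≤ 1 :=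
            pow_le_one₀ (by positivity) (inv_le_one_of_one_le₀ hden)
          have he2 : e i ω ^ 2 ≤ g i ^ 2 * (4 * (U i ⬝ᵥ U i) * (d ⬝ᵥ d)) := by
            rw [hee, mul_pow, mul_pow]
            calc _ ≤ g i ^ 2 * (U i ⬝ᵥ U i - ρ i ω) ^ 2 * 1 :=
                  mul_le_mul_of_nonneg_left hi1 (by positivity)
              _ ≤ _ := by
                  rw [mul_one]
                  exact mul_le_mul_of_nonneg_left hsq (by positivity)
          calc samplingP π ω * (w i * e i ω) ^ 2 = samplingP π ω * (w i ^ 2 * e i ω ^ 2) := by ring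
            _ ≤ samplingP π ω * (w i ^ 2 * (g i ^ 2 * (4 * (U i ⬝ᵥ U i) * (d ⬝ᵥ d)))) :=
                mul_le_mul_of_nonneg_left (mul_le_mul_of_nonneg_left he2 (sq_nonneg _)) (hP ω)
            _ = _ := by ring
      _ ≤ (w i ^ 2 * (g i ^ 2 * (4 * (U i ⬝ᵥ U i)))) * (6 * β * (U i ⬝ᵥ U i)) := by
          rw [← Finset.mul_sum]
          refine mul_le_mul_of_nonneg_left ?_ (by positivity)
          refine le_trans ?_ (D.second_moment (U i))
          exact Finset.sum_le_sum_of_subset_of_nonneg (Finset.subset_univ _) fun ω _ _ =>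
            mul_nonneg (hP ω) (dot_self_nonneg _)
      _ = 24 * β * w i ^ 2 * (g i * (U i ⬝ᵥ U i)) ^ 2 := by ring
      _ ≤ 24 * β * w i ^ 2 * (2 * β) ^ 2 := by
          have hβ := D.bpos
          exact mul_le_mul_of_nonneg_left
            (pow_le_pow_left₀ (mul_nonneg hg.le hl) (D.glev i) 2) (by positivity)
      _ = _ := by ring
  have hB0 : 0 ≤ 4 * (v ⬝ᵥ v) := by linarith [dot_self_nonneg v]
  calc _ ≤ (4 * (v ⬝ᵥ v)) * (96 * β ^ 3 * (w ⬝ᵥ w)) :=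
        mul_le_mul A B (Finset.sum_nonneg fun q _ => mul_nonneg (hP q.1) (sq_nonneg _)) hB0
    _ = _ := by ring

/-- Part of the leave-one-out expansion where the full sample is well conditioned but the reduced
sample is not, controlled by the probability of the latter event. -/
lemma Design.bad_part {n c N : ℕ} {U : Matrix (Fin n) (Fin c) ℝ} {π g : Fin n → ℝ} {β : ℝ}
    (D : Design U π g (N + 1) β) (w : Fin n → ℝ) (v : Fin c → ℝ) :
    open Classical in
    (∑ i, ∑ ω ∈ (goodSet U g : Finset (Fin N → Fin n))ᶜ, ((N + 1 : ℕ) * π i * samplingP π ω) *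
      (if HalfLower (g i • vecMulVec (U i) (U i) + sampleGram U g ω) then
      g i * w i * (v ⬝ᵥ ((g i • vecMulVec (U i) (U i) + sampleGram U g ω)⁻¹ *ᵥ U i))
      else 0)) ^ 2 ≤
      4 * (∑ ω ∈ (goodSet U g : Finset (Fin N → Fin n))ᶜ, samplingP π ω) *
        (v ⬝ᵥ v) * (w ⬝ᵥ w) := by
  classical
  have hP : ∀ {M : ℕ} (ω : Fin M → Fin n), 0 ≤ samplingP π ω :=
    fun ω => samplingP_nonneg (fun i => (D.pos i).le) ω
  set bad := (goodSet U g : Finset (Fin N → Fin n))ᶜ with hbad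
  set b : Fin n → Matrix (Fin c) (Fin c) ℝ → ℝ := fun i K =>
    if HalfLower K then v ⬝ᵥ (K⁻¹ *ᵥ U i) else 0 with hb
  have e1 : (∑ i, ∑ ω ∈ bad, ((N + 1 : ℕ) * π i * samplingP π ω) *
      (if HalfLower (g i • vecMulVec (U i) (U i) + sampleGram U g ω) then
      g i * w i * (v ⬝ᵥ ((g i • vecMulVec (U i) (U i) + sampleGram U g ω)⁻¹ *ᵥ U i))
      else 0)) =
      ∑ q ∈ (Finset.univ : Finset (Fin n)) ×ˢ bad,
        ((N + 1 : ℕ) * π q.1 * samplingP π q.2 * g q.1) *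
          (w q.1 * b q.1 (g q.1 • vecMulVec (U q.1) (U q.1) + sampleGram U g q.2)) := by
    rw [Finset.sum_product]
    refine Finset.sum_congr rfl fun i _ => Finset.sum_congr rfl fun ω _ => ?_
    simp only [hb]
    split_ifs <;> ring
  rw [e1]
  have hq : ∀ q : Fin n × (Fin N → Fin n),
      0 ≤ ((N + 1 : ℕ) : ℝ) * π q.1 * samplingP π q.2 * g q.1 := fun q => by
    have := D.pos q.1
    have := D.gpos q.1
    have := hP q.2
    positivity
  refine (weighted_cauchy _ _ _ _ fun q _ => hq q).trans ?_
  have A : ∑ q ∈ (Finset.univ : Finset (Fin n)) ×ˢ bad,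
      ((N + 1 : ℕ) * π q.1 * samplingP π q.2 * g q.1) * w q.1 ^ 2 ≤
      2 * (∑ ω ∈ bad, samplingP π ω) * (w ⬝ᵥ w) := by
    rw [Finset.sum_product]
    have : 2 * (∑ ω ∈ bad, samplingP π ω) * (w ⬝ᵥ w) =
        ∑ i, ∑ ω ∈ bad, 2 * samplingP π ω * w i ^ 2 := by
      simp only [← Finset.sum_mul, ← Finset.mul_sum, dotProduct, pow_two]
    rw [this]
    refine Finset.sum_le_sum fun i _ => Finset.sum_le_sum fun ω _ => ?_
    have := mul_le_mul_of_nonneg_right (D.gle i) (mul_nonneg (hP ω) (sq_nonneg (w i)))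
    linarith
  have B : ∑ q ∈ (Finset.univ : Finset (Fin n)) ×ˢ bad,
      ((N + 1 : ℕ) * π q.1 * samplingP π q.2 * g q.1) *
        b q.1 (g q.1 • vecMulVec (U q.1) (U q.1) + sampleGram U g q.2) ^ 2 ≤ 2 * (v ⬝ᵥ v) := by
    calc _ ≤ ∑ q : Fin n × (Fin N → Fin n),
          ((N + 1 : ℕ) * π q.1 * samplingP π q.2 * g q.1) *
          b q.1 (g q.1 • vecMulVec (U q.1) (U q.1) + sampleGram U g q.2) ^ 2 :=
          Finset.sum_le_sum_of_subset_of_nonneg (Finset.subset_univ _) fun q _ _ =>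
            mul_nonneg (hq q) (sq_nonneg _)
      _ = ∑ i, ∑ ω : Fin N → Fin n, ((N + 1 : ℕ) * π i * samplingP π ω) *
          (fun i K => g i * b i K ^ 2) i (g i • vecMulVec (U i) (U i) + sampleGram U g ω) := by
          rw [Fintype.sum_prod_type]
          exact Finset.sum_congr rfl fun i _ => Finset.sum_congr rfl fun ω _ => by ring
      _ = ∑ ω : Fin (N + 1) → Fin n,
          samplingP π ω * ∑ s, g (ω s) * b (ω s) (sampleGram U g ω) ^ 2 := by
          exact (sum_leave_one_out U π g fun i K => g i * b i K ^ 2).symm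
      _ ≤ ∑ ω : Fin (N + 1) → Fin n, samplingP π ω * (2 * (v ⬝ᵥ v)) := by
          refine Finset.sum_le_sum fun ω _ => mul_le_mul_of_nonneg_left ?_ (hP ω)
          by_cases hH : HalfLower (sampleGram U g ω)
          · obtain ⟨_, h1, _, hsy, _, _, h7⟩ := good_inverse (sampleGram_symm U g ω) hH
            refine le_trans (le_of_eq ?_) (h7 v)
            rw [hsy]
            have := sampleGram_quad U g ω ((sampleGram U g ω)⁻¹ *ᵥ v)
            rw [h1, dotProduct_comm] at this
            rw [dotProduct_comm, this]
            refine Finset.sum_congr rfl fun s _ => ?_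
            simp only [hb, if_pos hH]
            rw [hsy, dotProduct_comm]
          · simp only [hb, if_neg hH]
            simpa using dot_self_nonneg v
      _ = 2 * (v ⬝ᵥ v) := by rw [← Finset.sum_mul, samplingP_sum D.sum_one, one_mul]
  have h0 := dot_self_nonneg w
  have h1 := dot_self_nonneg v
  have h2 : 0 ≤ ∑ ω ∈ bad, samplingP π ω := Finset.sum_nonneg fun ω _ => hP ω
  calc _ ≤ (2 * (∑ ω ∈ bad, samplingP π ω) * (w ⬝ᵥ w)) * (2 * (v ⬝ᵥ v)) :=
        mul_le_mul A B (Finset.sum_nonneg fun q _ => mul_nonneg (hq q) (sq_nonneg _))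
          (by positivity)
    _ = _ := by ring

/-- The mean of `H⁻¹ ∑ₛ g w u` over the well-conditioned samples, for residual `w`. -/
def meanCoeff {n c m : ℕ} (U : Matrix (Fin n) (Fin c) ℝ) (π g w : Fin n → ℝ) : Fin c → ℝ :=
  ∑ ω ∈ (goodSet U g : Finset (Fin m → Fin n)), samplingP π ω •
    ((sampleGram U g ω)⁻¹ *ᵥ ∑ s, (g (ω s) * w (ω s)) • U (ω s))

/-- Bound for the mean coefficients `z`, obtained by expanding `z ⬝ᵥ z` over the left-out draw. -/
lemma Design.meanCoeff_le {n c N : ℕ} {U : Matrix (Fin n) (Fin c) ℝ} {π g : Fin n → ℝ} {β p : ℝ}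
    (D : Design U π g (N + 1) β) (w : Fin n → ℝ) (hw : Uᵀ *ᵥ w = 0)
    (hp : ∑ ω ∈ (goodSet U g : Finset (Fin N → Fin n))ᶜ, samplingP π ω ≤ p) :
    meanCoeff (m := N + 1) U π g w ⬝ᵥ meanCoeff (m := N + 1) U π g w ≤
      2 * (384 * β ^ 3 + 4 * p) * (w ⬝ᵥ w) := by
  classical
  set z := meanCoeff (m := N + 1) U π g w with hz
  have hb := D.bad_part w z
  have hg := D.good_part w hw z
  set T1 := ∑ i, ∑ ω ∈ (goodSet U g : Finset (Fin N → Fin n)),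
      ((N + 1 : ℕ) * π i * samplingP π ω) *
      (g i * w i * (z ⬝ᵥ ((g i • vecMulVec (U i) (U i) + sampleGram U g ω)⁻¹ *ᵥ U i))) with hT1
  set T2 := (∑ i, ∑ ω ∈ (goodSet U g : Finset (Fin N → Fin n))ᶜ,
      ((N + 1 : ℕ) * π i * samplingP π ω) *
      (if HalfLower (g i • vecMulVec (U i) (U i) + sampleGram U g ω) then
      g i * w i * (z ⬝ᵥ ((g i • vecMulVec (U i) (U i) + sampleGram U g ω)⁻¹ *ᵥ U i))
      else 0)) with hT2
  have hS : z ⬝ᵥ z = T1 + T2 := by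
    have e1 : z ⬝ᵥ z = ∑ ω : Fin (N + 1) → Fin n, samplingP π ω * ∑ s,
        (fun i K => if HalfLower K then g i * w i * (z ⬝ᵥ (K⁻¹ *ᵥ U i)) else 0) (ω s)
          (sampleGram U g ω) := by
      conv_lhs => enter [2]; rw [hz, meanCoeff]
      rw [dotProduct_sum]
      rw [← Finset.sum_subset (Finset.subset_univ (goodSet U g))]
      · refine Finset.sum_congr rfl fun ω hω => ?_
        have hH : HalfLower (sampleGram U g ω) := mem_goodSet.1 hω
        simp only [if_pos hH]
        rw [dotProduct_smul, smul_eq_mul, Matrix.mulVec_sum, dotProduct_sum]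
        congr 1
        refine Finset.sum_congr rfl fun s _ => ?_
        rw [Matrix.mulVec_smul, dotProduct_smul, smul_eq_mul]
      · intro ω _ hω
        have hH : ¬ HalfLower (sampleGram U g ω) := fun h => hω (mem_goodSet.2 h)
        simp [if_neg hH]
    refine e1.trans ((sum_leave_one_out U π g
      fun i K => if HalfLower K then g i * w i * (z ⬝ᵥ (K⁻¹ *ᵥ U i)) else 0).trans ?_)
    rw [hT1, hT2, ← Finset.sum_add_distrib]
    refine Finset.sum_congr rfl fun i _ => ?_
    rw [← Finset.sum_add_sum_compl (goodSet U g : Finset (Fin N → Fin n))]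
    congr 1
    refine Finset.sum_congr rfl fun ω hω => ?_
    have hH : HalfLower (sampleGram U g ω) := mem_goodSet.1 hω
    simp only [if_pos (hH.add_rankOne (D.gpos i).le (U i))]
  have h0 := dot_self_nonneg z
  have h1 := dot_self_nonneg w
  have h2 : (z ⬝ᵥ z) ^ 2 ≤ (2 * (384 * β ^ 3 + 4 * p) * (w ⬝ᵥ w)) * (z ⬝ᵥ z) := by
    have h3 : T2 ^ 2 ≤ 4 * p * (z ⬝ᵥ z) * (w ⬝ᵥ w) := hb.trans (by gcongr)
    rw [hS] at h3 hg ⊢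
    nlinarith [sq_nonneg (T1 - T2)]
  rcases h0.eq_or_lt with h | h
  · rw [← h]
    have hβ := D.bpos
    have : 0 ≤ p := le_trans (Finset.sum_nonneg fun ω _ =>
      samplingP_nonneg (fun i => (D.pos i).le) ω) hp
    positivity
  · rw [pow_two] at h2
    exact le_of_mul_le_mul_right h2 h

/-! ### Probability of an ill-conditioned sample -/

/-- With `q = 2^k` of order `1/β`, the tail `c (5/6)^q` is both at most `δ/2` and `O(β³)`. -/
lemma mass_bound {β δ : ℝ} {c k : ℕ} (hβ : 0 < β) (hc : 1 ≤ c) (hδ : 0 < δ) (hδ1 : δ ≤ 1 / 27)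
    (hL : 10 ^ 6 * β * Real.log (c / δ) ≤ 1) (hk : 1 / (80 * β) ≤ ((2 ^ k : ℕ) : ℝ)) :
    c * (5 / 6 : ℝ) ^ (2 ^ k) ≤ δ / 2 ∧ c * (5 / 6 : ℝ) ^ (2 ^ k) ≤ 6 * 960 ^ 3 * β ^ 3 := by
  have hc' : (1 : ℝ) ≤ c := by exact_mod_cast hc
  set E := Real.exp (-(1 / (960 * β))) with hE
  have hE0 : 0 < E := Real.exp_pos _
  have hE1 : E ≤ 1 := Real.exp_le_one_iff.2 (by have : 0 < 1 / (960 * β) := by positivity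
                                                linarith)
  have h1 : (5 / 6 : ℝ) ^ (2 ^ k) ≤ E * E := by
    have h56 : (5 / 6 : ℝ) ≤ Real.exp (-(1 / 6)) := by
      have := Real.add_one_le_exp (-(1 / 6) : ℝ)
      linarith
    calc (5 / 6 : ℝ) ^ (2 ^ k) ≤ Real.exp (-(1 / 6)) ^ (2 ^ k) :=
          pow_le_pow_left₀ (by norm_num) h56 _
      _ = Real.exp (((2 ^ k : ℕ) : ℝ) * -(1 / 6)) := (Real.exp_nat_mul _ _).symm
      _ ≤ Real.exp (-(1 / (960 * β)) + -(1 / (960 * β))) := by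
          refine Real.exp_le_exp.2 ?_
          have : 1 / (960 * β) = 1 / (80 * β) / 12 := by field_simp; norm_num
          rw [this]
          linarith
      _ = E * E := Real.exp_add _ _
  have h2 : E ≤ (δ / c) ^ 2 := by
    have hpos : 0 < (c : ℝ) / δ := by positivity
    have : (δ / c) ^ 2 = Real.exp (-(2 * Real.log (c / δ))) := by
      rw [Real.exp_neg, two_mul, Real.exp_add, Real.exp_log hpos]
      field_simp
    rw [this, hE]
    refine Real.exp_le_exp.2 (neg_le_neg ?_)
    rw [le_div_iff₀ (by positivity)]
    nlinarith
  have h3 : c * E ≤ δ / 2 := by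
    calc c * E ≤ c * (δ / c) ^ 2 := by gcongr
      _ = δ * (δ / c) := by field_simp
      _ ≤ δ * (1 / 2) := by
          refine mul_le_mul_of_nonneg_left ?_ hδ.le
          rw [div_le_iff₀ (by linarith : (0 : ℝ) < c)]
          linarith
      _ = δ / 2 := by ring
  have h4 : E ≤ 6 * 960 ^ 3 * β ^ 3 := by
    have := Real.pow_div_factorial_le_exp (1 / (960 * β)) (by positivity) 3
    rw [hE, Real.exp_neg, inv_le_comm₀ (Real.exp_pos _) (by positivity)]
    refine le_trans (le_of_eq ?_) this
    norm_num [Nat.factorial]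
    field_simp
    norm_num
  have h5 : c * (5 / 6 : ℝ) ^ (2 ^ k) ≤ (c * E) * E := by
    rw [mul_assoc]
    exact mul_le_mul_of_nonneg_left h1 (by linarith)
  constructor
  · nlinarith
  · nlinarith

lemma one_le_log_ratio {δ : ℝ} {c : ℕ} (hc : 1 ≤ c) (hδ : 0 < δ) (hδ1 : δ ≤ 1 / 27) :
    1 ≤ Real.log (c / δ) := by
  have hc' : (1 : ℝ) ≤ c := by exact_mod_cast hc
  rw [Real.le_log_iff_exp_le (by positivity), le_div_iff₀ hδ]
  have := Real.exp_one_lt_d9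
  nlinarith [Real.exp_pos 1]

/-- A sample of at least `m - 1` draws is well conditioned up to probability `O(min(δ, β³))`; this
covers the full sample and the sample with one draw removed. -/
lemma Design.prob_bad {n c N m : ℕ} {U : Matrix (Fin n) (Fin c) ℝ} {π g : Fin n → ℝ} {β δ : ℝ}
    (D : Design U π g m β) (hN : m ≤ N + 1) (hc : 1 ≤ c) (hδ : 0 < δ)
    (hδ1 : δ ≤ 1 / 27) (hL : 10 ^ 6 * β * Real.log (c / δ) ≤ 1) :
    ∑ ω ∈ (goodSet U g : Finset (Fin N → Fin n))ᶜ, samplingP π ω ≤ δ / 2 ∧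
    ∑ ω ∈ (goodSet U g : Finset (Fin N → Fin n))ᶜ, samplingP π ω ≤ 6 * 960 ^ 3 * β ^ 3 := by
  have hβ := D.bpos
  have hlog := one_le_log_ratio hc hδ hδ1
  have hβ6 : 10 ^ 6 * β ≤ 1 := by nlinarith
  have hmN : (m : ℝ) ≤ N + 1 := by exact_mod_cast hN
  have hmβ := D.one_le
  have hm : 10 ^ 6 ≤ (m : ℝ) := by nlinarith
  -- The exponent `2 ^ k` lies between `1 / (80 β)` and `1 / (40 β)`: large enough for the tail
  -- to be small, small enough for the factor `1 + 2 ^ k * (2 β)` to stay below `21 / 20`.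
  obtain ⟨k, hk1, hk2⟩ := exists_nat_pow_near (x := 1 / (40 * β)) (y := (2 : ℝ))
    (by rw [le_div_iff₀ (by positivity)]; linarith) (by norm_num)
  have hk80 : 1 / (80 * β) ≤ ((2 ^ k : ℕ) : ℝ) := by
    have : 1 / (80 * β) = 1 / (40 * β) / 2 := by field_simp; norm_num
    rw [this]
    push_cast
    rw [pow_succ] at hk2
    linarith
  have hk40 : ((2 ^ k : ℕ) : ℝ) * (2 * β) ≤ 1 / 20 := by
    rw [le_div_iff₀ (by positivity)] at hk1
    push_cast
    linarith
  have hq0 : 0 ≤ ((2 ^ k : ℕ) : ℝ) * (2 * β) := by positivity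
  have key := prob_bad_le D.orth (M := m) (β := 2 * β) (by linarith) (by linarith)
    (fun i => (D.pos i).le) D.sum_one (fun i => (D.gpos i).le)
    (fun i => by
      rw [div_le_iff₀ (by linarith)]
      have := D.geq i
      have := mul_nonneg (D.gpos i).le (dot_self_nonneg (U i))
      linarith) D.glev k N
    (by
      rw [mul_one_div, le_div_iff₀ (by positivity)]
      nlinarith)
  obtain ⟨h1, h2⟩ := mass_bound hβ hc hδ hδ1 hL hk80
  exact ⟨key.trans h1, key.trans h2⟩

/-! ### The debiased sketched pseudo-inverse -/

/-- The sketched left inverse `((ŠC)ᵀŠC)⁻¹ (ŠC)ᵀ Š` of `C`. -/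
def sketchInv {n c m : ℕ} (Cm : Matrix (Fin n) (Fin c) ℝ) (π : Fin n → ℝ) (ω : Fin m → Fin n) :
    Matrix (Fin c) (Fin n) ℝ :=
  ((samplingSdeb Cm π ω * Cm)ᵀ * (samplingSdeb Cm π ω * Cm))⁻¹ *
    (samplingSdeb Cm π ω * Cm)ᵀ * samplingSdeb Cm π ω

/-- Whitening `C = U B`: `U` has orthonormal columns and spans the column space of `C`. -/
lemma exists_whitening {n c : ℕ} (Cm : Matrix (Fin n) (Fin c) ℝ) (h : IsUnit (Cmᵀ * Cm).det) :
    ∃ (U : Matrix (Fin n) (Fin c) ℝ) (B : Matrix (Fin c) (Fin c) ℝ),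
      Uᵀ * U = 1 ∧ IsUnit B.det ∧ Cm = U * B := by
  have hps : PSD (Cmᵀ * Cm) := by
    refine ⟨by rw [Matrix.transpose_mul, Matrix.transpose_transpose], fun x => ?_⟩
    rw [← Matrix.mulVec_mulVec, Matrix.dotProduct_mulVec, Matrix.vecMul_transpose]
    exact dot_self_nonneg _
  obtain ⟨O, μ, -, -, hμ, hO⟩ := hps.spectral
  obtain ⟨B, hB⟩ : ∃ B : Matrix (Fin c) (Fin c) ℝ, Cmᵀ * Cm = Bᵀ * B := by
    refine ⟨diagonal (fun i => Real.sqrt (μ i)) * Oᵀ, ?_⟩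
    rw [hO, Matrix.transpose_mul, Matrix.transpose_transpose, Matrix.diagonal_transpose,
      Matrix.mul_assoc O (diagonal _) (diagonal _ * _), ← Matrix.mul_assoc (diagonal _),
      Matrix.diagonal_mul_diagonal, ← Matrix.mul_assoc]
    simp only [fun i => Real.mul_self_sqrt (hμ i)]
  have hBu : IsUnit B.det := by
    rw [hB, Matrix.det_mul] at h
    exact isUnit_of_mul_isUnit_right h
  refine ⟨Cm * B⁻¹, B, ?_, hBu, ?_⟩
  · have hBt : IsUnit (Bᵀ).det := by rwa [Matrix.det_transpose]
    rw [Matrix.transpose_mul, Matrix.mul_assoc, ← Matrix.mul_assoc Cmᵀ, hB,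
      Matrix.mul_assoc Bᵀ, Matrix.mul_nonsing_inv _ hBu, Matrix.mul_one,
      Matrix.transpose_nonsing_inv, Matrix.nonsing_inv_mul _ hBt]
  · rw [Matrix.mul_assoc, Matrix.nonsing_inv_mul _ hBu, Matrix.mul_one]

lemma lev_whitened {n c : ℕ} {U : Matrix (Fin n) (Fin c) ℝ} {B : Matrix (Fin c) (Fin c) ℝ}
    (hU : Uᵀ * U = 1) (hB : IsUnit B.det) (i : Fin n) : lev (U * B) i = U i ⬝ᵥ U i := by
  have hBt : IsUnit (Bᵀ).det := by rwa [Matrix.det_transpose]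
  have e1 : (U * B)ᵀ * (U * B) = Bᵀ * B := by
    rw [Matrix.transpose_mul, Matrix.mul_assoc, ← Matrix.mul_assoc Uᵀ, hU, Matrix.one_mul]
  have e2 : (U * B) i = Bᵀ *ᵥ U i := by
    rw [Matrix.mulVec_transpose]; rfl
  rw [lev, e1, e2, Matrix.mul_inv_rev, Matrix.mulVec_mulVec, Matrix.mul_assoc,
    Matrix.nonsing_inv_mul _ hBt, Matrix.mul_one, dotProduct_comm, Matrix.dotProduct_mulVec,
    Matrix.vecMul_transpose, Matrix.mulVec_mulVec, Matrix.mul_nonsing_inv _ hB, Matrix.one_mulVec]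

lemma samplingSdeb_apply {n c m : ℕ} (Cm : Matrix (Fin n) (Fin c) ℝ) (π : Fin n → ℝ)
    (ω : Fin m → Fin n) (s : Fin m) (j : Fin n) : samplingSdeb Cm π ω s j =
      if j = ω s then 1 / Real.sqrt (1 - lev Cm (ω s) / (m * π (ω s))) *
        (1 / Real.sqrt (m * π (ω s))) else 0 := by
  simp [samplingSdeb, samplingS, Matrix.diagonal_mul]

lemma samplingSdeb_mul_apply {n c m l : ℕ} (Cm : Matrix (Fin n) (Fin c) ℝ) (π : Fin n → ℝ)
    (ω : Fin m → Fin n) (Y : Matrix (Fin n) (Fin l) ℝ) (s : Fin m) (k : Fin l) :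
    (samplingSdeb Cm π ω * Y) s k = 1 / Real.sqrt (1 - lev Cm (ω s) / (m * π (ω s))) *
        (1 / Real.sqrt (m * π (ω s))) * Y (ω s) k := by
  simp [Matrix.mul_apply, samplingSdeb_apply]

/-- The squared rescaled sampling weight is `1 / (mπ - ℓ)`, here with `M = mπ`. -/
lemma debiased_weight {M ℓ : ℝ} (h0 : 0 < M) (h : ℓ < M) :
    (1 / Real.sqrt (1 - ℓ / M) * (1 / Real.sqrt M)) ^ 2 = (M - ℓ)⁻¹ := by
  have h1 : 0 < 1 - ℓ / M := by rw [sub_pos, div_lt_one h0]; exact h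
  have h2 : (1 - ℓ / M) * M = M - ℓ := by field_simp
  rw [mul_pow, div_pow, div_pow, Real.sq_sqrt h1.le, Real.sq_sqrt h0.le, one_pow, ← h2, mul_inv,
    one_div, one_div]

lemma sketch_gram {n c m : ℕ} {Cm : Matrix (Fin n) (Fin c) ℝ} {π : Fin n → ℝ}
    (hπ : ∀ i, 0 < π i) (hm : 0 < m) (hlev : ∀ i, lev Cm i < m * π i) (ω : Fin m → Fin n)
    {a b : ℕ} (Y : Matrix (Fin n) (Fin a) ℝ) (Z : Matrix (Fin n) (Fin b) ℝ) :
    (samplingSdeb Cm π ω * Y)ᵀ * (samplingSdeb Cm π ω * Z) =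
      ∑ s, (m * π (ω s) - lev Cm (ω s))⁻¹ • vecMulVec (Y (ω s)) (Z (ω s)) := by
  ext i j
  have hm' : (0 : ℝ) < m := by exact_mod_cast hm
  simp only [Matrix.mul_apply, Matrix.transpose_apply]
  rw [Matrix.sum_apply]
  refine Finset.sum_congr rfl fun s _ => ?_
  have := samplingSdeb_mul_apply Cm π ω Y s i
  rw [Matrix.mul_apply] at this
  rw [this]
  have := samplingSdeb_mul_apply Cm π ω Z s j
  rw [Matrix.mul_apply] at this
  rw [this, Matrix.smul_apply, Matrix.vecMulVec_apply, smul_eq_mul,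
    ← debiased_weight (mul_pos hm' (hπ _)) (hlev (ω s))]
  ring

/-- The weights `1/(mπᵢ - ℓᵢ)` form a debiased design with `β = θ_max c / m`, and the sample-size
condition says that `β` is small. -/
lemma design_of_lev {n c m : ℕ} {U : Matrix (Fin n) (Fin c) ℝ} {B : Matrix (Fin c) (Fin c) ℝ}
    (hU : Uᵀ * U = 1) (hB : IsUnit B.det) {π : Fin n → ℝ} (hπ : ∀ i, 0 < π i)
    (hπ1 : ∑ i, π i = 1) (hlev : ∀ i, lev (U * B) i < m * π i) (hm : 0 < m) (hc : 1 ≤ c)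
    {δ : ℝ} (hδ : 0 < δ) (hδ1 : δ ≤ 1 / 27)
    (hL : 10 ^ 6 * thetaMax (U * B) π * c * Real.log (c / δ) ≤ m) :
    Design U π (fun i => (m * π i - lev (U * B) i)⁻¹) m (thetaMax (U * B) π * c / m) ∧
      10 ^ 6 * (thetaMax (U * B) π * c / m) * Real.log (c / δ) ≤ 1 := by
  have hc' : (1 : ℝ) ≤ c := by exact_mod_cast hc
  have hm' : (0 : ℝ) < m := by exact_mod_cast hm
  set θ := thetaMax (U * B) π with hθ
  set β := θ * c / m with hβ
  have hle : ∀ i, U i ⬝ᵥ U i ≤ β * (m * π i) := by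
    intro i
    have h1 : lev (U * B) i / (c * π i) ≤ θ :=
      le_ciSup (f := fun i => lev (U * B) i / (c * π i)) (Set.finite_range _).bddAbove i
    rw [lev_whitened hU hB, div_le_iff₀ (mul_pos (by linarith) (hπ i))] at h1
    refine h1.trans (le_of_eq ?_)
    rw [hβ]
    field_simp
  have hsum : ∑ i, U i ⬝ᵥ U i = c := by
    have h1 : (Uᵀ * U).trace = c := by rw [hU]; simp
    rw [← h1, Matrix.trace_mul_comm]
    simp only [Matrix.trace, Matrix.diag, Matrix.mul_apply, dotProduct, Matrix.transpose_apply]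
  have hmβ : 1 ≤ m * β := by
    have h1 : ∑ i, U i ⬝ᵥ U i ≤ ∑ i, β * (m * π i) := Finset.sum_le_sum fun i _ => hle i
    rw [hsum, ← Finset.mul_sum, ← Finset.mul_sum, hπ1] at h1
    linarith
  have hβ0 : 0 < β := by
    by_contra h
    nlinarith
  have hL' : 10 ^ 6 * β * Real.log (c / δ) ≤ 1 := by
    have : 10 ^ 6 * β * Real.log (c / δ) = 10 ^ 6 * θ * c * Real.log (c / δ) / m := by
      rw [hβ]; ring
    rw [this, div_le_one hm']
    exact hL
  have hlog := one_le_log_ratio hc hδ hδ1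
  have hβh : β ≤ 1 / 2 := by nlinarith
  have hpos : ∀ i, 0 < m * π i - U i ⬝ᵥ U i := fun i => by
    have := hlev i
    rw [lev_whitened hU hB] at this
    linarith
  refine ⟨⟨hU, hπ, hπ1, fun i => ?_, fun i => ?_, fun i => ?_, fun i => ?_, hβ0, hβh, hmβ⟩, hL'⟩ <;>
    simp only [lev_whitened hU hB]
  · exact inv_pos.2 (hpos i)
  · have := (hpos i).ne'
    field_simp
    ring
  · rw [← div_eq_mul_inv, div_le_iff₀ (hpos i)]
    nlinarith [hle i, mul_pos hm' (hπ i)]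
  · rw [inv_mul_eq_div, div_le_iff₀ (hpos i)]
    nlinarith [hle i, mul_pos hm' (hπ i), hpos i,
      mul_le_mul_of_nonneg_right hβh (mul_pos hβ0 (mul_pos hm' (hπ i))).le]

/-! ### One-sided bias of the debiased sketch -/

lemma vecMulVec_whitened {n c : ℕ} (U : Matrix (Fin n) (Fin c) ℝ) (B : Matrix (Fin c) (Fin c) ℝ)
    (i : Fin n) : vecMulVec ((U * B) i) ((U * B) i) = Bᵀ * vecMulVec (U i) (U i) * B := by
  have e1 : (U * B) i = U i ᵥ* B := rfl
  rw [e1, Matrix.mul_vecMulVec, Matrix.vecMulVec_mul, Matrix.mulVec_transpose]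

lemma sketch_gram_whitened {n c m : ℕ} {U : Matrix (Fin n) (Fin c) ℝ}
    {B : Matrix (Fin c) (Fin c) ℝ} {π : Fin n → ℝ} (hπ : ∀ i, 0 < π i) (hm : 0 < m)
    (hlev : ∀ i, lev (U * B) i < m * π i) (ω : Fin m → Fin n) :
    (samplingSdeb (U * B) π ω * (U * B))ᵀ * (samplingSdeb (U * B) π ω * (U * B)) =
      Bᵀ * sampleGram U (fun i => (m * π i - lev (U * B) i)⁻¹) ω * B := by
  rw [sketch_gram hπ hm hlev, sampleGram, Finset.mul_sum, Finset.sum_mul]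
  refine Finset.sum_congr rfl fun s _ => ?_
  rw [vecMulVec_whitened, Matrix.mul_smul, Matrix.smul_mul]

/-- Right-hand side of the sketched normal equations in whitened coordinates. -/
lemma sketch_rhs {n c m : ℕ} {U : Matrix (Fin n) (Fin c) ℝ} {B : Matrix (Fin c) (Fin c) ℝ}
    {π : Fin n → ℝ} (hπ : ∀ i, 0 < π i) (hm : 0 < m)
    (hlev : ∀ i, lev (U * B) i < m * π i) (ω : Fin m → Fin n) (w : Fin n → ℝ) :
    ((samplingSdeb (U * B) π ω * (U * B))ᵀ * samplingSdeb (U * B) π ω) *ᵥ w =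
      Bᵀ *ᵥ ∑ s, ((m * π (ω s) - lev (U * B) (ω s))⁻¹ * w (ω s)) • U (ω s) := by
  have h := sketch_gram hπ hm hlev ω (U * B) (1 : Matrix (Fin n) (Fin n) ℝ)
  rw [Matrix.mul_one] at h
  rw [h, Matrix.sum_mulVec, Matrix.mulVec_sum]
  refine Finset.sum_congr rfl fun s _ => ?_
  have e1 : (U * B) (ω s) = Bᵀ *ᵥ U (ω s) := by rw [Matrix.mulVec_transpose]; rfl
  have e2 : (1 : Matrix (Fin n) (Fin n) ℝ) (ω s) ⬝ᵥ w = w (ω s) := by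
    have : ((1 : Matrix (Fin n) (Fin n) ℝ) *ᵥ w) (ω s) = w (ω s) := by rw [Matrix.one_mulVec]
    exact this
  rw [Matrix.smul_mulVec, Matrix.vecMulVec_mulVec, e2, Matrix.mulVec_smul, e1, mul_smul]
  congr 1
  ext k
  simp only [Pi.smul_apply, smul_eq_mul, MulOpposite.smul_eq_mul_unop, MulOpposite.unop_op]
  ring

/-- On a well-conditioned sample the sketched problem is solvable, and its solution is expressed in
the orthonormal coordinates. -/
lemma sketchInv_good {n c m : ℕ} {U : Matrix (Fin n) (Fin c) ℝ} {B : Matrix (Fin c) (Fin c) ℝ}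
    (hB : IsUnit B.det) {π : Fin n → ℝ} (hπ : ∀ i, 0 < π i) (hm : 0 < m)
    (hlev : ∀ i, lev (U * B) i < m * π i) (ω : Fin m → Fin n)
    (hω : ω ∈ goodSet U (fun i => (m * π i - lev (U * B) i)⁻¹)) :
    IsUnit ((samplingSdeb (U * B) π ω * (U * B))ᵀ * (samplingSdeb (U * B) π ω * (U * B))).det ∧
    sketchInv (U * B) π ω * (U * B) = 1 ∧
    ∀ w, (U * B) *ᵥ (sketchInv (U * B) π ω *ᵥ w) =
      U *ᵥ ((sampleGram U (fun i => (m * π i - lev (U * B) i)⁻¹) ω)⁻¹ *ᵥ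
        ∑ s, ((m * π (ω s) - lev (U * B) (ω s))⁻¹ * w (ω s)) • U (ω s)) := by
  obtain ⟨hH, -⟩ := good_inverse (sampleGram_symm U _ ω) (mem_goodSet.1 hω)
  have hBt : IsUnit (Bᵀ).det := by rwa [Matrix.det_transpose]
  have hG := sketch_gram_whitened hπ hm hlev ω
  have hdet : IsUnit ((samplingSdeb (U * B) π ω * (U * B))ᵀ *
      (samplingSdeb (U * B) π ω * (U * B))).det := by
    rw [hG, Matrix.det_mul, Matrix.det_mul]
    exact (hBt.mul hH).mul hB
  refine ⟨hdet, ?_, fun w => ?_⟩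
  · rw [sketchInv, Matrix.mul_assoc, Matrix.mul_assoc, Matrix.nonsing_inv_mul _ hdet]
  · rw [sketchInv, Matrix.mul_assoc, ← Matrix.mulVec_mulVec, ← Matrix.mulVec_mulVec,
      sketch_rhs hπ hm hlev, hG,
      Matrix.mul_inv_rev, Matrix.mul_inv_rev, ← Matrix.mulVec_mulVec, ← Matrix.mulVec_mulVec,
      Matrix.mulVec_mulVec _ B, Matrix.mul_nonsing_inv _ hB,
      Matrix.one_mulVec, Matrix.mulVec_mulVec _ (Bᵀ)⁻¹, Matrix.nonsing_inv_mul _ hBt,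
      Matrix.one_mulVec]

lemma condExp_mul_right {Ω : Type*} {P : Ω → ℝ} {ζ : Finset Ω} {a b l : ℕ}
    (A : Ω → Matrix (Fin a) (Fin b) ℝ) (Y : Matrix (Fin b) (Fin l) ℝ) :
    condExp P ζ A * Y = condExp P ζ fun ω => A ω * Y := by
  simp only [condExp, Matrix.smul_mul, Matrix.sum_mul]

lemma condExp_const {Ω V : Type*} [AddCommGroup V] [Module ℝ V] {P : Ω → ℝ} {ζ : Finset Ω}
    (h : eventProb P ζ ≠ 0) {A : Ω → V} {v : V} (hA : ∀ ω ∈ ζ, A ω = v) : condExp P ζ A = v := by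
  rw [condExp, Finset.sum_congr rfl fun ω hω => by rw [hA ω hω], ← Finset.sum_smul]
  exact inv_smul_smul₀ h v

/-- Conclusion for one factor: conditionally on an event of probability at least `1 - δ/2`, the
mean sketched projection fixes the column space of `C`, and its norm on residuals is at most
`500000 β^(3/2)` with `β = θ_max(C) c / m`. -/
lemma one_sided {n c m : ℕ} (hn : 0 < n) (Cm : Matrix (Fin n) (Fin c) ℝ) (π : Fin n → ℝ)
    (hdet : IsUnit (Cmᵀ * Cm).det) (hπ : ∀ i, 0 < π i) (hπ1 : ∑ i, π i = 1)
    (hlev : ∀ i, lev Cm i < m * π i) {δ : ℝ} (hδ : 0 < δ) (hδ1 : δ ≤ 1 / 27)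
    (hL : 10 ^ 6 * thetaMax Cm π * c * Real.log (c / δ) ≤ m) :
    ∃ ζ : Finset (Fin m → Fin n), 1 - δ / 2 ≤ eventProb (samplingP π) ζ ∧
      (∀ ω ∈ ζ, IsUnit ((samplingSdeb Cm π ω * Cm)ᵀ * (samplingSdeb Cm π ω * Cm)).det) ∧
      condExp (samplingP π) ζ (sketchInv Cm π) * Cm = 1 ∧
      0 ≤ thetaMax Cm π ^ 3 * c ^ 3 / m ^ 3 ∧
      500000 ^ 2 * (thetaMax Cm π ^ 3 * c ^ 3 / m ^ 3) ≤ 1 ∧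
      ∀ w : Fin n → ℝ, Cmᵀ *ᵥ w = 0 →
        ((Cm * condExp (samplingP π) ζ (sketchInv Cm π)) *ᵥ w) ⬝ᵥ
          ((Cm * condExp (samplingP π) ζ (sketchInv Cm π)) *ᵥ w) ≤
          500000 ^ 2 * (thetaMax Cm π ^ 3 * c ^ 3 / m ^ 3) * (w ⬝ᵥ w) := by
  rcases Nat.eq_zero_or_pos c with rfl | hc
  -- Without columns every matrix with an index in `Fin 0` vanishes; all samples are good.
  · refine ⟨Finset.univ, ?_, fun ω _ => by simp, Subsingleton.elim _ _, by simp, by simp,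
      fun w _ => ?_⟩
    · rw [eventProb, samplingP_sum hπ1]; linarith
    · have : Cm * condExp (samplingP π) Finset.univ (sketchInv (m := m) Cm π) = 0 := by
        ext i j; simp [Matrix.mul_apply]
      simp [this]
  obtain ⟨U, B, hU, hB, rfl⟩ := exists_whitening Cm hdet
  have hm : 0 < m := by
    rcases Nat.eq_zero_or_pos m with rfl | h
    · have := hlev ⟨0, hn⟩
      rw [lev_whitened hU hB] at this
      have := dot_self_nonneg (U ⟨0, hn⟩)
      simp at *
      linarith
    · exact h
  obtain ⟨N, rfl⟩ : ∃ N, m = N + 1 := ⟨m - 1, by omega⟩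
  obtain ⟨D, hL'⟩ := design_of_lev hU hB hπ hπ1 hlev hm hc hδ hδ1 hL
  set g : Fin n → ℝ := fun i => (((N + 1 : ℕ) : ℝ) * π i - lev (U * B) i)⁻¹ with hg
  have hβ3 : thetaMax (U * B) π ^ 3 * c ^ 3 / ((N + 1 : ℕ) : ℝ) ^ 3 =
      (thetaMax (U * B) π * c / ((N + 1 : ℕ) : ℝ)) ^ 3 := by
    rw [div_pow, mul_pow]
  rw [hβ3]
  set β := thetaMax (U * B) π * c / ((N + 1 : ℕ) : ℝ) with hβ
  have hβ0 : 0 < β := D.bpos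
  have hβ6 : β ≤ 1 / 10 ^ 6 := by
    have := one_le_log_ratio hc hδ hδ1
    rw [le_div_iff₀ (by norm_num)]
    nlinarith
  have hP1 := (D.prob_bad (N := N + 1) (by omega) hc hδ hδ1 hL').1
  have hP2 := (D.prob_bad (N := N) le_rfl hc hδ hδ1 hL').2
  set ζ : Finset (Fin (N + 1) → Fin n) := goodSet U g with hζ
  have hprob : 1 - δ / 2 ≤ eventProb (samplingP π) ζ := by
    have := Finset.sum_add_sum_compl ζ (samplingP π)
    rw [samplingP_sum hπ1] at this
    rw [eventProb]
    linarith
  have hprob2 : 1 / 2 ≤ eventProb (samplingP π) ζ := by linarith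
  refine ⟨ζ, hprob, fun ω hω => (sketchInv_good hB hπ hm hlev ω hω).1, ?_, by positivity, ?_,
    fun w hw => ?_⟩
  · rw [condExp_mul_right]
    exact condExp_const (by linarith) fun ω hω => (sketchInv_good hB hπ hm hlev ω hω).2.1
  · calc 500000 ^ 2 * β ^ 3 ≤ 500000 ^ 2 * (1 / 10 ^ 6) ^ 3 := by gcongr
      _ ≤ 1 := by norm_num
  · have hBt : IsUnit (Bᵀ).det := by rwa [Matrix.det_transpose]
    have hUw : Uᵀ *ᵥ w = 0 := by
      rw [Matrix.transpose_mul, ← Matrix.mulVec_mulVec] at hw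
      have h := congrArg (fun x => (Bᵀ)⁻¹ *ᵥ x) hw
      simpa [Matrix.mulVec_mulVec, ← Matrix.mul_assoc, Matrix.nonsing_inv_mul _ hBt] using h
    have hM : ((U * B) * condExp (samplingP π) ζ (sketchInv (U * B) π)) *ᵥ w =
        (eventProb (samplingP π) ζ)⁻¹ • (U *ᵥ meanCoeff (m := N + 1) U π g w) := by
      rw [condExp, Matrix.mul_smul, Matrix.smul_mulVec, Matrix.mul_sum, Matrix.sum_mulVec,
        meanCoeff, Matrix.mulVec_sum]
      congr 1
      refine Finset.sum_congr rfl fun ω hω => ?_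
      rw [Matrix.mul_smul, Matrix.smul_mulVec, ← Matrix.mulVec_mulVec,
        (sketchInv_good hB hπ hm hlev ω hω).2.2 w, Matrix.mulVec_smul]
    have hz := D.meanCoeff_le w hUw hP2
    have hz0 := dot_self_nonneg (meanCoeff (m := N + 1) U π g w)
    rw [hM, smul_dotProduct, dotProduct_smul, orth_dot hU, smul_eq_mul, smul_eq_mul]
    have hi : (eventProb (samplingP π) ζ)⁻¹ ≤ 2 := by
      rw [inv_le_comm₀ (by linarith) (by norm_num)]
      linarith
    have hi0 : 0 ≤ (eventProb (samplingP π) ζ)⁻¹ := by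
      rw [inv_nonneg]
      linarith
    have hw0 := dot_self_nonneg w
    calc _ ≤ 2 * (2 * (meanCoeff (m := N + 1) U π g w ⬝ᵥ meanCoeff (m := N + 1) U π g w)) := by
          gcongr
      _ ≤ 2 * (2 * (2 * (384 * β ^ 3 + 4 * (6 * 960 ^ 3 * β ^ 3)) * (w ⬝ᵥ w))) := by gcongr
      _ = 8 * (384 + 4 * (6 * 960 ^ 3)) * (β ^ 3 * (w ⬝ᵥ w)) := by ring
      _ ≤ 500000 ^ 2 * (β ^ 3 * (w ⬝ᵥ w)) := by
          refine mul_le_mul_of_nonneg_right (by norm_num) (by positivity)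
      _ = _ := by ring

/-! ### Two-sided assembly -/

/-- The squared Frobenius norm. -/
def frobSq {k l : ℕ} (A : Matrix (Fin k) (Fin l) ℝ) : ℝ := (Aᵀ * A).trace

lemma frobSq_eq_col {k l : ℕ} (A : Matrix (Fin k) (Fin l) ℝ) :
    frobSq A = ∑ j, Aᵀ j ⬝ᵥ Aᵀ j := by
  simp only [frobSq, Matrix.trace, Matrix.diag, Matrix.mul_apply, dotProduct,
    Matrix.transpose_apply]

lemma frobSq_nonneg {k l : ℕ} (A : Matrix (Fin k) (Fin l) ℝ) : 0 ≤ frobSq A := by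
  rw [frobSq_eq_col]
  exact Finset.sum_nonneg fun j _ => dot_self_nonneg _

lemma frobNorm_sq {k l : ℕ} (A : Matrix (Fin k) (Fin l) ℝ) : frobNorm A ^ 2 = frobSq A :=
  Real.sq_sqrt (frobSq_nonneg A)

lemma frobSq_transpose {k l : ℕ} (A : Matrix (Fin k) (Fin l) ℝ) : frobSq Aᵀ = frobSq A := by
  rw [frobSq, frobSq, Matrix.transpose_transpose, Matrix.trace_mul_comm]

lemma frobSq_sub_of_orth {k l : ℕ} {A B : Matrix (Fin k) (Fin l) ℝ} (h : (Aᵀ * B).trace = 0) :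
    frobSq (A - B) = frobSq A + frobSq B := by
  have h' : (Bᵀ * A).trace = 0 := by
    rw [← Matrix.trace_transpose, Matrix.transpose_mul, Matrix.transpose_transpose, h]
  rw [frobSq, Matrix.transpose_sub, Matrix.sub_mul, Matrix.mul_sub, Matrix.mul_sub,
    Matrix.trace_sub, Matrix.trace_sub, Matrix.trace_sub, h, h', frobSq, frobSq]
  ring

lemma frobSq_add_le {k l : ℕ} (A B : Matrix (Fin k) (Fin l) ℝ) :
    frobSq (A + B) ≤ 2 * frobSq A + 2 * frobSq B := by
  have h := frobSq_nonneg (A - B)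
  simp only [frobSq, Matrix.transpose_sub, Matrix.transpose_add, Matrix.sub_mul, Matrix.mul_sub,
    Matrix.add_mul, Matrix.mul_add, Matrix.trace_sub, Matrix.trace_add] at h ⊢
  linarith

lemma frobSq_proj {k l : ℕ} {P : Matrix (Fin k) (Fin k) ℝ} (hPt : Pᵀ = P) (hP : P * P = P)
    (W : Matrix (Fin k) (Fin l) ℝ) : frobSq (P * W) ≤ frobSq W ∧ frobSq (W - P * W) ≤ frobSq W := by
  have h1 : ((P * W)ᵀ * (W - P * W)).trace = 0 := by
    rw [Matrix.transpose_mul, hPt, Matrix.mul_sub, ← Matrix.mul_assoc _ P W, Matrix.mul_assoc _ P P,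
      hP, sub_self, Matrix.trace_zero]
  have h2 : ((P * W)ᵀ * -(W - P * W)).trace = 0 := by rw [Matrix.mul_neg, Matrix.trace_neg, h1,
    neg_zero]
  have h3 := frobSq_sub_of_orth h2
  have e1 : P * W - -(W - P * W) = W := by abel
  have e2 : frobSq (-(W - P * W)) = frobSq (W - P * W) := by
    simp only [frobSq, Matrix.transpose_neg, Matrix.neg_mul, Matrix.mul_neg, neg_neg]
  rw [e1, e2] at h3
  constructor <;> linarith [frobSq_nonneg (P * W), frobSq_nonneg (W - P * W)]

lemma frobSq_proj_right {k l : ℕ} {Q : Matrix (Fin l) (Fin l) ℝ} (hQt : Qᵀ = Q) (hQ : Q * Q = Q)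
    (W : Matrix (Fin k) (Fin l) ℝ) : frobSq (W * Q) ≤ frobSq W ∧ frobSq (W - W * Q) ≤ frobSq W := by
  have h := frobSq_proj hQt hQ Wᵀ
  have e : Q * Wᵀ = (W * Q)ᵀ := by rw [Matrix.transpose_mul, hQt]
  rwa [e, ← Matrix.transpose_sub, frobSq_transpose, frobSq_transpose, frobSq_transpose] at h

/-- A norm bound for `M` on the kernel of `P` transfers columnwise to the Frobenius norm. -/
lemma frobSq_mul_le {k l : ℕ} {P M : Matrix (Fin k) (Fin k) ℝ} {a : ℝ}
    (h : ∀ w : Fin k → ℝ, P *ᵥ w = 0 → (M *ᵥ w) ⬝ᵥ (M *ᵥ w) ≤ a * (w ⬝ᵥ w))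
    {W : Matrix (Fin k) (Fin l) ℝ} (hW : P * W = 0) : frobSq (M * W) ≤ a * frobSq W := by
  rw [frobSq_eq_col, frobSq_eq_col, Finset.mul_sum]
  refine Finset.sum_le_sum fun j _ => ?_
  have e : ∀ A : Matrix (Fin k) (Fin k) ℝ, (A * W)ᵀ j = A *ᵥ Wᵀ j := fun A => by
    ext i
    simp [Matrix.mul_apply, Matrix.mulVec, dotProduct]
  rw [e]
  refine h _ ?_
  rw [← e, hW]
  rfl

/-- If `M_C`, `M_R` are oblique versions of the orthogonal projections `P`, `Q` and have small
norm on the orthogonal complements, then the excess loss of `M_C X M_Rᵀ` over `P X Q` is small.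
By Pythagoras this excess equals `‖M_C E M_Rᵀ‖²` with `E = X - P X Q`, and `P E Q = 0`. -/
lemma excess_loss {n p : ℕ} {X : Matrix (Fin n) (Fin p) ℝ} {P M : Matrix (Fin n) (Fin n) ℝ}
    {Q L : Matrix (Fin p) (Fin p) ℝ} {a b : ℝ}
    (hPt : Pᵀ = P) (hP : P * P = P) (hQt : Qᵀ = Q) (hQ : Q * Q = Q)
    (hMP : M * P = P) (hPM : P * M = M) (hLQ : L * Q = Q) (hQL : Q * L = L)
    (hM : ∀ w : Fin n → ℝ, P *ᵥ w = 0 → (M *ᵥ w) ⬝ᵥ (M *ᵥ w) ≤ a * (w ⬝ᵥ w))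
    (hL : ∀ w : Fin p → ℝ, Q *ᵥ w = 0 → (L *ᵥ w) ⬝ᵥ (L *ᵥ w) ≤ b * (w ⬝ᵥ w))
    (ha : 0 ≤ a) (ha1 : a ≤ 1) (hb : 0 ≤ b) :
    frobSq (M * X * Lᵀ - X) - frobSq (P * X * Q - X) ≤ 8 * (a + b) * frobSq (P * X * Q - X) := by
  have hQLt : Q * Lᵀ = Q := by
    have := congrArg Matrix.transpose hLQ
    rwa [Matrix.transpose_mul, hQt] at this
  have hLtQ : Lᵀ * Q = Lᵀ := by
    have := congrArg Matrix.transpose hQL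
    rwa [Matrix.transpose_mul, hQt] at this
  set E := X - P * X * Q with hE
  have hneg : frobSq (P * X * Q - X) = frobSq E := by
    rw [hE, ← neg_sub X, frobSq, frobSq]
    simp only [Matrix.transpose_neg, Matrix.neg_mul, Matrix.mul_neg, neg_neg]
  have hPEQ : P * E * Q = 0 := by
    rw [hE, Matrix.mul_sub, Matrix.sub_mul, Matrix.mul_assoc P X Q, ← Matrix.mul_assoc P P, hP,
      Matrix.mul_assoc P (X * Q) Q, Matrix.mul_assoc X Q Q, hQ, sub_self]
  set Δ := M * E * Lᵀ with hΔ
  have hMXL : M * X * Lᵀ - X = Δ - E := by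
    have : M * (P * X * Q) * Lᵀ = P * X * Q := by
      rw [Matrix.mul_assoc P, ← Matrix.mul_assoc M, hMP, Matrix.mul_assoc, Matrix.mul_assoc X,
        hQLt]
    rw [hΔ, hE, Matrix.mul_sub, Matrix.sub_mul, this]
    abel
  have horth : (Δᵀ * E).trace = 0 := by
    have hPΔQ : P * Δ * Q = Δ := by
      rw [hΔ, Matrix.mul_assoc, Matrix.mul_assoc _ Lᵀ, hLtQ, Matrix.mul_assoc M,
        ← Matrix.mul_assoc P, hPM]
    rw [← hPΔQ, Matrix.transpose_mul, Matrix.transpose_mul, hPt, hQt, Matrix.mul_assoc,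
      Matrix.trace_mul_comm, Matrix.mul_assoc, Matrix.mul_assoc, ← Matrix.mul_assoc P, hPEQ,
      Matrix.mul_zero, Matrix.trace_zero]
  rw [hneg, hMXL, frobSq_sub_of_orth horth, add_sub_cancel_right]
  set E1 := E - P * E with hE1
  have hPE1 : P * E1 = 0 := by
    rw [hE1, Matrix.mul_sub, ← Matrix.mul_assoc, hP, sub_self]
  have hME : M * E = P * E + M * E1 := by
    have : M * E1 = M * E - P * E := by
      rw [hE1, Matrix.mul_sub M E (P * E), ← Matrix.mul_assoc M P, hMP]
    rw [this]
    abel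
  set Y := M * E with hY
  set Z := Y - Y * Q with hZ
  have hYQ : Y * Q = M * (E1 * Q) := by
    rw [hME, Matrix.add_mul, hPEQ, zero_add, Matrix.mul_assoc]
  have hsplit : Δ = M * (E1 * Q) + Z * Lᵀ := by
    rw [← hYQ, hZ, Matrix.sub_mul, Matrix.mul_assoc Y Q, hQLt]
    abel
  have hE1le : frobSq E1 ≤ frobSq E := (frobSq_proj hPt hP E).2
  have hE0 := frobSq_nonneg E
  have h1 : frobSq (M * (E1 * Q)) ≤ a * frobSq E := by
    refine (frobSq_mul_le hM (by rw [← Matrix.mul_assoc, hPE1, Matrix.zero_mul])).trans ?_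
    exact mul_le_mul_of_nonneg_left (((frobSq_proj_right hQt hQ E1).1).trans hE1le) ha
  have h2 : frobSq Y ≤ 4 * frobSq E := by
    rw [hME]
    refine (frobSq_add_le _ _).trans ?_
    have h3 := (frobSq_proj hPt hP E).1
    have h4 := frobSq_mul_le hM hPE1
    have h5 : a * frobSq E1 ≤ 1 * frobSq E := mul_le_mul ha1 hE1le (frobSq_nonneg _) zero_le_one
    linarith
  have h3 : frobSq (Z * Lᵀ) ≤ b * (4 * frobSq E) := by
    rw [← frobSq_transpose, Matrix.transpose_mul, Matrix.transpose_transpose]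
    refine (frobSq_mul_le hL ?_).trans ?_
    · rw [hZ, Matrix.transpose_sub, Matrix.transpose_mul Y Q, hQt, Matrix.mul_sub,
        ← Matrix.mul_assoc, hQ, sub_self]
    · rw [frobSq_transpose]
      exact mul_le_mul_of_nonneg_left (((frobSq_proj_right hQt hQ Y).2).trans h2) hb
  rw [hsplit]
  refine (frobSq_add_le _ _).trans ?_
  nlinarith [mul_nonneg ha hE0]

/-- The debiased fast CUR core factors into one sketched left inverse for each side. -/
lemma curUcheck_eq {n p c r mc mr : ℕ} (X : Matrix (Fin n) (Fin p) ℝ)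
    (Cm : Matrix (Fin n) (Fin c) ℝ) (Rm : Matrix (Fin r) (Fin p) ℝ)
    (πC : Fin n → ℝ) (πR : Fin p → ℝ) (ω : (Fin mc → Fin n) × (Fin mr → Fin p)) :
    curUcheck X Cm Rm πC πR ω =
      sketchInv Cm πC ω.1 * X * (sketchInv Rmᵀ πR ω.2)ᵀ := by
  simp only [curUcheck, sketchInv, Matrix.transpose_mul, Matrix.transpose_nonsing_inv,
    Matrix.transpose_transpose, Matrix.mul_assoc]

lemma eventProb_prod {n p mc mr : ℕ} (πC : Fin n → ℝ) (πR : Fin p → ℝ)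
    (ζ : Finset (Fin mc → Fin n)) (η : Finset (Fin mr → Fin p)) :
    eventProb (curP πC πR) (ζ ×ˢ η) = eventProb (samplingP πC) ζ * eventProb (samplingP πR) η := by
  simp only [eventProb, curP]
  rw [Finset.sum_product, Finset.sum_mul_sum]

/-- The two sketches are independent and stay so conditionally on a product event. -/
lemma condExp_prod {n p c r mc mr : ℕ} (X : Matrix (Fin n) (Fin p) ℝ)
    (πC : Fin n → ℝ) (πR : Fin p → ℝ)
    (ζ : Finset (Fin mc → Fin n)) (η : Finset (Fin mr → Fin p))
    (A : (Fin mc → Fin n) → Matrix (Fin c) (Fin n) ℝ)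
    (B : (Fin mr → Fin p) → Matrix (Fin r) (Fin p) ℝ) :
    condExp (curP πC πR) (ζ ×ˢ η) (fun ω => A ω.1 * X * (B ω.2)ᵀ) =
      condExp (samplingP πC) ζ A * X * (condExp (samplingP πR) η B)ᵀ := by
  have h : ∀ (x y : ℝ) (G : Matrix (Fin c) (Fin n) ℝ) (H : Matrix (Fin r) (Fin p) ℝ),
      (x * y) • (G * X * Hᵀ) = x • G * X * (y • H)ᵀ := fun x y G H => by
    rw [Matrix.transpose_smul, Matrix.smul_mul, Matrix.smul_mul, Matrix.mul_smul, smul_smul]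
  simp only [condExp, eventProb_prod, curP, mul_inv, ← h]
  congr 1
  rw [Finset.sum_product, Matrix.transpose_sum, Matrix.sum_mul, Matrix.sum_mul]
  refine Finset.sum_congr rfl fun ω _ => ?_
  rw [Matrix.mul_sum]
  exact Finset.sum_congr rfl fun η _ => h _ _ _ _

lemma one_le_log_div {n : ℕ} (hn : 3 ≤ n) : 1 ≤ Real.log n / Real.log (Real.log n) := by
  have hn' : (3 : ℝ) ≤ n := by exact_mod_cast hn
  have h1 : 1 < Real.log n := by
    rw [Real.lt_log_iff_exp_lt (by linarith)]
    have := Real.exp_one_lt_d9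
    linarith
  have h2 : 0 < Real.log (Real.log n) := Real.log_pos h1
  rw [one_le_div h2]
  have := Real.log_le_sub_one_of_pos (by linarith : 0 < Real.log n)
  linarith

lemma rpow_le_small {n : ℕ} (hn : 3 ≤ n) {α : ℝ} (hα : 0 < α) :
    (n : ℝ) ^ (-(3 + α)) ≤ 1 / 27 := by
  have hn' : (3 : ℝ) ≤ n := by exact_mod_cast hn
  calc (n : ℝ) ^ (-(3 + α)) ≤ (n : ℝ) ^ (-3 : ℝ) :=
        Real.rpow_le_rpow_of_exponent_le (by linarith) (by linarith)
    _ ≤ (3 : ℝ) ^ (-3 : ℝ) := Real.rpow_le_rpow_of_nonpos (by norm_num) hn' (by norm_num)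
    _ = 1 / 27 := by
        rw [Real.rpow_neg (by norm_num)]
        norm_num

lemma proj_facts {n c : ℕ} {Cm : Matrix (Fin n) (Fin c) ℝ} (h : IsUnit (Cmᵀ * Cm).det) :
    (Cm * (Cmᵀ * Cm)⁻¹ * Cmᵀ)ᵀ = Cm * (Cmᵀ * Cm)⁻¹ * Cmᵀ ∧
    (Cm * (Cmᵀ * Cm)⁻¹ * Cmᵀ) * Cm = Cm ∧ Cmᵀ * (Cm * (Cmᵀ * Cm)⁻¹ * Cmᵀ) = Cmᵀ := by
  refine ⟨?_, ?_, ?_⟩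
  · rw [Matrix.transpose_mul, Matrix.transpose_mul, Matrix.transpose_nonsing_inv,
      Matrix.transpose_mul, Matrix.transpose_transpose, Matrix.mul_assoc]
  · rw [Matrix.mul_assoc, Matrix.mul_assoc, Matrix.nonsing_inv_mul _ h, Matrix.mul_one]
  · rw [← Matrix.mul_assoc, ← Matrix.mul_assoc, Matrix.mul_nonsing_inv _ h, Matrix.one_mul]

/-- **Bias of debiased fast CUR decomposition** (Theorem 4.8): there are
absolute constants `C₀, C' > 0` such that, for `C` made of `c` columns of `X`
and `R` made of `r` rows of `X` with `Cᵀ C` and `R Rᵀ` invertible, under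
row-norm conditions with exponents `α_c, α_r`, for
`0 < δ ≤ min{n^{−(3+α_c)}, p^{−(3+α_r)}}`, `m_c ≥ C₀ θ_max(C) c log(c/δ)` and
`m_r ≥ C₀ θ_max(Rᵀ) r log(r/δ)`, there is an event `ζ` of probability at least
`1 − δ` on which all inverted matrices in `Ǔ` are invertible and
`Bias_ζ(Ǔ) ≤ ε² L(U_CUR)`, where
`ε = C' ((log n/log log n) √(θ_max(C)³ c³/m_c³) +
        (log p/log log p) √(θ_max(Rᵀ)³ r³/m_r³))`. -/
theorem debiased_fast_cur_bias :
    ∃ C₀ C' : ℝ, 0 < C₀ ∧ 0 < C' ∧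
      ∀ (n p c r mc mr : ℕ) (X : Matrix (Fin n) (Fin p) ℝ)
        (Cm : Matrix (Fin n) (Fin c) ℝ) (Rm : Matrix (Fin r) (Fin p) ℝ)
        (g : Fin c → Fin p) (f : Fin r → Fin n)
        (πC : Fin n → ℝ) (πR : Fin p → ℝ) (αc αr : ℝ),
        3 ≤ n → 3 ≤ p →
        Function.Injective g → Cm = X.submatrix id g →
        Function.Injective f → Rm = X.submatrix f id →
        IsUnit (Cmᵀ * Cm).det → IsUnit (Rm * Rmᵀ).det →
        0 < αc → 0 < αr →
        (∀ i, Cm i ≠ 0 → (n : ℝ) ^ (-αc) ≤ (Cm i ⬝ᵥ Cm i) / frobNorm Cm ^ 2) →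
        (∀ j, Rmᵀ j ≠ 0 →
          (p : ℝ) ^ (-αr) ≤ (Rmᵀ j ⬝ᵥ Rmᵀ j) / frobNorm Rmᵀ ^ 2) →
        (∀ i, 0 < πC i) → (∑ i, πC i = 1) →
        (∀ j, 0 < πR j) → (∑ j, πR j = 1) →
        (∀ i, lev Cm i < mc * πC i) →
        (∀ j, lev Rmᵀ j < mr * πR j) →
        ∀ δ : ℝ, 0 < δ →
          δ ≤ (n : ℝ) ^ (-(3 + αc)) → δ ≤ (p : ℝ) ^ (-(3 + αr)) →
        C₀ * thetaMax Cm πC * c * Real.log (c / δ) ≤ mc →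
        C₀ * thetaMax Rmᵀ πR * r * Real.log (r / δ) ≤ mr →
        ∃ ζ : Finset ((Fin mc → Fin n) × (Fin mr → Fin p)),
          1 - δ ≤ eventProb (curP πC πR) ζ ∧
          (∀ ω ∈ ζ,
            IsUnit ((samplingSdeb Cm πC ω.1 * Cm)ᵀ *
              (samplingSdeb Cm πC ω.1 * Cm)).det ∧
            IsUnit (Rm * (samplingSdeb Rmᵀ πR ω.2)ᵀ *
              samplingSdeb Rmᵀ πR ω.2 * Rmᵀ).det) ∧
          lossCUR X Cm Rm (condExp (curP πC πR) ζ (curUcheck X Cm Rm πC πR)) -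
              lossCUR X Cm Rm (optCUR X Cm Rm)
            ≤ (C' * ((Real.log n / Real.log (Real.log n)) *
                    Real.sqrt (thetaMax Cm πC ^ 3 * c ^ 3 / mc ^ 3) +
                  (Real.log p / Real.log (Real.log p)) *
                    Real.sqrt (thetaMax Rmᵀ πR ^ 3 * r ^ 3 / mr ^ 3))) ^ 2 *
              lossCUR X Cm Rm (optCUR X Cm Rm) := by
  refine ⟨10 ^ 6, 3 * 500000, by norm_num, by norm_num, ?_⟩
  intro n p c r mc mr X Cm Rm g f πC πR αc αr hn hp _ _ _ _ hCdet hRdet hαc hαr _ _ hπC hπC1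
    hπR hπR1 hlevC hlevR δ hδ hδn hδp hmc hmr
  have hδ1 : δ ≤ 1 / 27 := hδn.trans (rpow_le_small hn hαc)
  have hRdet' : IsUnit (Rmᵀᵀ * Rmᵀ).det := by rwa [Matrix.transpose_transpose]
  obtain ⟨ζ, hζ, hζd, hA, ha0, ha1, hAb⟩ :=
    one_sided (by omega) Cm πC hCdet hπC hπC1 hlevC hδ hδ1 hmc
  obtain ⟨η, hη, hηd, hB, hb0, _, hBb⟩ :=
    one_sided (by omega) Rmᵀ πR hRdet' hπR hπR1 hlevR hδ hδ1 hmr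
  refine ⟨ζ ×ˢ η, ?_, fun ω hω => ?_, ?_⟩
  · rw [eventProb_prod]
    nlinarith
  · obtain ⟨h1, h2⟩ := Finset.mem_product.1 hω
    refine ⟨hζd _ h1, ?_⟩
    have := hηd _ h2
    rwa [Matrix.transpose_mul, Matrix.transpose_transpose, ← Matrix.mul_assoc] at this
  set x := thetaMax Cm πC ^ 3 * c ^ 3 / mc ^ 3 with hx
  set y := thetaMax Rmᵀ πR ^ 3 * r ^ 3 / mr ^ 3 with hy
  set A := condExp (samplingP πC) ζ (sketchInv Cm πC) with hAdef
  set B := condExp (samplingP πR) η (sketchInv Rmᵀ πR) with hBdef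
  have hU : condExp (curP πC πR) (ζ ×ˢ η) (curUcheck X Cm Rm πC πR) = A * X * Bᵀ := by
    rw [← condExp_prod]
    exact congrArg _ (funext fun ω => curUcheck_eq X Cm Rm πC πR ω)
  obtain ⟨hPt, hPC, hCP⟩ := proj_facts hCdet
  obtain ⟨hQt, hQR, hRQ⟩ := proj_facts hRdet'
  set P := Cm * (Cmᵀ * Cm)⁻¹ * Cmᵀ with hP
  set Q := Rmᵀ * (Rmᵀᵀ * Rmᵀ)⁻¹ * Rmᵀᵀ with hQ
  have hPP : P * P = P := by
    conv_lhs => rw [hP, Matrix.mul_assoc, hCP]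
  have hQQ : Q * Q = Q := by
    conv_lhs => rw [hQ, Matrix.mul_assoc, hRQ]
  have key := excess_loss (X := X) (M := Cm * A) (L := Rmᵀ * B)
    (a := 500000 ^ 2 * x) (b := 500000 ^ 2 * y) hPt hPP hQt hQQ
    (by rw [hP, Matrix.mul_assoc Cm _ Cmᵀ, Matrix.mul_assoc Cm A, ← Matrix.mul_assoc A, hA,
          Matrix.one_mul])
    (by rw [← Matrix.mul_assoc, hPC])
    (by rw [hQ, Matrix.mul_assoc Rmᵀ _ Rmᵀᵀ, Matrix.mul_assoc Rmᵀ B, ← Matrix.mul_assoc B, hB,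
          Matrix.one_mul])
    (by rw [← Matrix.mul_assoc, hQR])
    (fun w hw => hAb w (by rw [← hCP, ← Matrix.mulVec_mulVec, hw, Matrix.mulVec_zero]))
    (fun w hw => hBb w (by rw [← hRQ, ← Matrix.mulVec_mulVec, hw, Matrix.mulVec_zero]))
    (by positivity) ha1 (by positivity)
  have e1 : Cm * (A * X * Bᵀ) * Rm = Cm * A * X * (Rmᵀ * B)ᵀ := by
    simp only [Matrix.transpose_mul, Matrix.transpose_transpose, Matrix.mul_assoc]
  have e2 : Cm * optCUR X Cm Rm * Rm = P * X * Q := by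
    simp only [hP, hQ, optCUR, Matrix.transpose_transpose, Matrix.mul_assoc]
  rw [hU, lossCUR, lossCUR, frobNorm_sq, frobNorm_sq, e1, e2]
  refine key.trans (mul_le_mul_of_nonneg_right ?_ (frobSq_nonneg _))
  have hln := one_le_log_div hn
  have hlp := one_le_log_div hp
  have hsx := Real.sqrt_nonneg x
  have hsy := Real.sqrt_nonneg y
  have hx2 := Real.sq_sqrt ha0
  have hy2 := Real.sq_sqrt hb0
  -- The logarithmic factors are at least `1`, so they can be dropped.
  have hmono : Real.sqrt x + Real.sqrt y ≤
      Real.log n / Real.log (Real.log n) * Real.sqrt x +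
        Real.log p / Real.log (Real.log p) * Real.sqrt y :=
    add_le_add (le_mul_of_one_le_left hsx hln) (le_mul_of_one_le_left hsy hlp)
  have hsq := pow_le_pow_left₀ (add_nonneg hsx hsy) hmono 2
  rw [mul_pow]
  nlinarith [mul_nonneg hsx hsy]

end
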